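/- arXiv:2406.18687 — 3 statements merged into one kernel-verified Lean document; each statement's English description precedes it below -/
import Mathlib

section
/- The dimension of the 2-swap algebra Σ_n, i.e., the subalgebra of End(V^⊗n) generated by the permutation operators where dim V = 2, equals the n-th Catalan number C_n = (1/(n+1))·binom(2n, n). -/
/-- The operator on `V^⊗n` (here realized as `(Fin n → Fin d) → ℂ`, `dim V = d`)
induced by a permutation `σ ∈ Sₙ` permuting the tensor factors. -/
def permOp (d n : ℕ) (σ : Equiv.Perm (Fin n)) :
    Module.End ℂ ((Fin n → Fin d) → ℂ) where
  toFun f := fun x => f (x ∘ σ)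
  map_add' _ _ := rfl
  map_smul' _ _ := rfl

/-!
For `V` of dimension `d`, antisymmetrizing over more than `d` tensor factors gives `0`. If `σ`
decreases along `d + 1` positions, antisymmetrizing over them therefore expresses `permOp d n σ`
through lexicographically smaller permutations, so the permutations without a decreasing
subsequence of length `d + 1` span. These are the unions of `d` increasing subsequences (Mirsky),
and a permutation that increases on the classes of a colouring is the lexicographically least one
inducing its rearrangement of the colours. Evaluating at such colourings, viewed as basis
tensors, is thus triangular, and the spanning operators are independent.

For `d = 2`, a permutation avoids `321` exactly when it increases both on its exceedances
(`i < σ i`) and on its non-exceedances. It is then determined by its exceedance positions and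
exceedance values, and reading the positions as opening and the values as closing steps gives all
Dyck words.
-/

section

open Equiv Finset

section DecreasingSubsequences

variable {α β : Type*} [LinearOrder α] {d : ℕ} {σ ρ τ : Perm α} {s : Finset α} {c : α → β}

/-- `σ` has no decreasing subsequence of length `d + 1`, a subsequence being encoded by the finset
of its positions; for `d = 2` these are the `321`-avoiding permutations. -/
def AvoidsDecreasing (d : ℕ) (σ : Perm α) : Prop :=
  ∀ s : Finset α, StrictAntiOn σ s → #s ≤ d

/-- `σ` is increasing along each colour class of the colouring `c` of its positions, so that `c`
splits `σ` into increasing subsequences. -/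
def StrictMonoOnFibers (c : α → β) (σ : Perm α) : Prop :=
  ∀ ⦃i j⦄, c i = c j → i < j → σ i < σ j

theorem StrictMonoOnFibers.avoidsDecreasing [Fintype β] (h : StrictMonoOnFibers c σ) :
    AvoidsDecreasing (Fintype.card β) σ := by
  intro s hs
  refine card_le_card_of_injOn c (fun i _ => mem_univ (c i)) fun i hi j hj hij => ?_
  by_contra hne
  rcases lt_or_gt_of_ne hne with hlt | hlt
  · exact (h hij hlt).asymm (hs hi hj hlt)
  · exact (h hij.symm hlt).asymm (hs hj hi hlt)

theorem strictAntiOn_insert_of_forall_lt [Preorder β] {f : α → β} {i : α} (hf : StrictAntiOn f s)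
    (hi : ∀ j ∈ s, j < i ∧ f i < f j) : StrictAntiOn f (insert i s : Finset α) := by
  intro j hj k hk hjk
  rw [mem_coe, mem_insert] at hj hk
  rcases hj with rfl | hj <;> rcases hk with rfl | hk
  · exact absurd hjk (lt_irrefl _)
  · exact absurd hjk (hi k hk).1.asymm
  · exact (hi j hj).2
  · exact hf hj hk hjk

theorem AvoidsDecreasing.exists_strictMonoOnFibers [Finite α] (h : AvoidsDecreasing d σ) :
    ∃ c : α → Fin d, StrictMonoOnFibers c σ := by
  classical
  have := Fintype.ofFinite α
  -- Mirsky: colour `i` by the length of the longest decreasing subsequence that `σ i` can extend.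
  let chains (i : α) : Finset (Finset α) := {s | StrictAntiOn σ s ∧ ∀ j ∈ s, j < i ∧ σ i < σ j}
  let depth (i : α) : ℕ := (chains i).sup card
  have exists_chain (i : α) : ∃ s ∈ chains i, #s = depth i := by
    obtain ⟨s, hs, hcard⟩ := exists_mem_eq_sup (chains i)
      ⟨∅, by simp [chains, Set.subsingleton_empty.strictAntiOn]⟩ card
    exact ⟨s, hs, hcard.symm⟩
  have extend {i : α} {s : Finset α} (hs : s ∈ chains i) :
      StrictAntiOn σ (insert i s : Finset α) ∧ #(insert i s) = #s + 1 := by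
    obtain ⟨hanti, hlt⟩ := (mem_filter.mp hs).2
    exact ⟨strictAntiOn_insert_of_forall_lt hanti hlt,
      card_insert_of_notMem fun hi => (hlt i hi).1.false⟩
  have depth_lt (i : α) : depth i < d := by
    obtain ⟨s, hs, hcard⟩ := exists_chain i
    rw [← hcard, ← Nat.add_one_le_iff, ← (extend hs).2]
    exact h _ (extend hs).1
  refine ⟨fun i => ⟨depth i, depth_lt i⟩, fun i j hij hlt => ?_⟩
  by_contra hle
  have hσ : σ j < σ i := lt_of_le_of_ne (not_lt.mp hle) (σ.injective.ne hlt.ne')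
  obtain ⟨s, hs, hcard⟩ := exists_chain i
  have hmem : insert i s ∈ chains j := by
    refine mem_filter.mpr ⟨mem_univ _, (extend hs).1, fun k hk => ?_⟩
    rcases mem_insert.mp hk with rfl | hk
    · exact ⟨hlt, hσ⟩
    · obtain ⟨hki, hσk⟩ := (mem_filter.mp hs).2.2 k hk
      exact ⟨hki.trans hlt, hσ.trans hσk⟩
  have hdepth : #(insert i s) ≤ depth j := le_sup (f := card) hmem
  rw [(extend hs).2, hcard, Fin.mk.inj hij] at hdepth
  exact Nat.not_succ_le_self _ hdepth

theorem exists_lt_perm_apply [WellFoundedLT α] (hτ : τ ≠ 1) :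
    ∃ i, i < τ i ∧ ∀ j < i, τ j = j := by
  obtain ⟨i, hi, hmin⟩ := WellFounded.has_min (wellFounded_lt (α := α)) {i | τ i ≠ i}
    (by simpa [Set.Nonempty, Perm.ext_iff] using hτ)
  have hfix : ∀ j < i, τ j = j := fun j hj => by_contra fun hne => hmin j hne hj
  refine ⟨i, lt_of_le_of_ne (not_lt.mp fun hlt => hi ?_) (Ne.symm hi), hfix⟩
  exact τ.injective (hfix _ hlt)

theorem toLex_mul_lt_of_strictAntiOn [WellFoundedLT α] (hs : StrictAntiOn σ s)
    (hτs : ∀ i, τ i ≠ i → i ∈ s) (hτ : τ ≠ 1) : toLex ⇑(σ * τ) < toLex ⇑σ := by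
  obtain ⟨i, hi, hfix⟩ := exists_lt_perm_apply hτ
  refine ⟨i, fun j hj => congrArg σ (hfix j hj), ?_⟩
  exact hs (hτs i hi.ne') (hτs _ (τ.injective.ne hi.ne')) hi

theorem StrictMonoOnFibers.toLex_le [WellFoundedLT α] (hρ : StrictMonoOnFibers c ρ)
    (hc : ∀ i, c (ρ⁻¹ (σ i)) = c i) : toLex ⇑ρ ≤ toLex ⇑σ := by
  obtain rfl | hne := eq_or_ne ρ σ
  · exact le_rfl
  obtain ⟨i, hi, hfix⟩ := exists_lt_perm_apply (τ := ρ⁻¹ * σ) (by rwa [Ne, inv_mul_eq_one])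
  refine le_of_lt ⟨i, fun j hj => Perm.inv_eq_iff_eq.mp (hfix j hj) |>.symm, ?_⟩
  simpa using hρ (hc i).symm hi

theorem StrictMonoOnFibers.eq [WellFoundedLT α] (hσ : StrictMonoOnFibers c σ)
    (hρ : StrictMonoOnFibers c ρ) (hc : ∀ i, c (ρ⁻¹ (σ i)) = c i) : σ = ρ := by
  have hc' (i : α) : c (σ⁻¹ (ρ i)) = c i := by simpa using (hc (σ⁻¹ (ρ i))).symm
  exact DFunLike.coe_injective (toLex.injective (le_antisymm (hσ.toLex_le hc') (hρ.toLex_le hc)))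

end DecreasingSubsequences

section LinearAlgebra

theorem linearIndependent_of_triangular {ι γ R M : Type*} [CommRing R] [NoZeroDivisors R]
    [AddCommGroup M] [Module R M] [LinearOrder γ] (r : ι → γ) {v : ι → M}
    (φ : ι → Module.Dual R M) (hdiag : ∀ i, φ i (v i) ≠ 0)
    (htri : ∀ i j, i ≠ j → φ i (v j) ≠ 0 → r i < r j) : LinearIndependent R v := by
  classical
  rw [linearIndependent_iff']
  intro s g hg
  by_contra! hne
  obtain ⟨k, hks, hgk⟩ := hne
  obtain ⟨i, hi, hmax⟩ :=
    exists_max_image {i ∈ s | g i ≠ 0} r ⟨k, mem_filter.mpr ⟨hks, hgk⟩⟩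
  obtain ⟨his, hgi⟩ := mem_filter.mp hi
  have hsum : ∑ j ∈ s, g j * φ i (v j) = 0 := by simpa using congrArg (φ i) hg
  rw [sum_eq_single_of_mem i his] at hsum
  · exact mul_ne_zero hgi (hdiag i) hsum
  · intro j hjs hji
    by_contra hterm
    obtain ⟨hgj, hφ⟩ := mul_ne_zero_iff.mp hterm
    exact (hmax j (mem_filter.mpr ⟨hjs, hgj⟩)).not_gt (htri i j hji.symm hφ)

variable {d n : ℕ}

theorem permOp_single_apply (σ : Perm (Fin n)) (x y : Fin n → Fin d) :
    permOp d n σ (Pi.single y 1) x = if x ∘ σ = y then 1 else 0 := by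
  simp [permOp, Pi.single_apply]

theorem sum_sign_smul_permOp_mul_eq_zero {s : Finset (Fin n)} (hs : d < #s) (σ : Perm (Fin n)) :
    ∑ τ : Perm (Fin n) with τ.support ⊆ s, Perm.sign τ • permOp d n (σ * τ) = 0 := by
  refine LinearMap.ext fun f => funext fun x => ?_
  -- Two positions in `s` carry the same label; swapping them pairs off terms of opposite signs.
  obtain ⟨a, ha, b, hb, hab, hx⟩ := exists_ne_map_eq_of_card_lt_of_maps_to
    (by simpa using hs) fun i (_ : i ∈ s) => mem_univ ((x ∘ σ) i)
  have hswap : x ∘ σ ∘ swap a b = x ∘ σ := by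
    rw [← Function.comp_assoc, comp_swap_eq_update, hx, Function.update_eq_self,
      ← hx, Function.update_eq_self]
  rw [LinearMap.sum_apply, Finset.sum_apply]
  refine sum_involution (fun τ _ => swap a b * τ) (fun τ _ => ?_) (fun τ _ _ => ?_)
    (fun τ hτ => ?_) fun τ _ => swap_mul_self_mul a b τ
  · have happly : permOp d n (σ * (swap a b * τ)) f x = permOp d n (σ * τ) f x :=
      congrArg (fun y => f (y ∘ τ)) hswap
    rw [Perm.sign_mul, Perm.sign_swap hab, neg_one_mul]
    simp [happly]
  · exact mul_eq_right.not.mpr (swap_eq_one_iff.not.mpr hab)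
  · have hτs : τ.support ⊆ s := (mem_filter.mp hτ).2
    have hswap_s : (swap a b).support ⊆ s := by
      rw [Perm.support_swap hab, insert_subset_iff, singleton_subset_iff]
      exact ⟨ha, hb⟩
    exact mem_filter.mpr ⟨mem_univ _,
      (Perm.support_mul_le _ _).trans (union_subset hswap_s hτs)⟩

theorem permOp_mem_span_avoidsDecreasing (σ : Perm (Fin n)) :
    permOp d n σ ∈ Submodule.span ℂ
      (Set.range fun ρ : {ρ : Perm (Fin n) // AvoidsDecreasing d ρ} => permOp d n ρ) := by
  induction hσ : toLex ⇑σ using WellFoundedLT.induction generalizing σ with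
  | ind r ih =>
  subst hσ
  by_cases hav : AvoidsDecreasing d σ
  · exact Submodule.subset_span ⟨⟨σ, hav⟩, rfl⟩
  simp only [AvoidsDecreasing, not_forall, not_le] at hav
  obtain ⟨s, hanti, hcard⟩ := hav
  have hrel := sum_sign_smul_permOp_mul_eq_zero hcard σ
  rw [← add_sum_erase _ _ (a := 1) (by simp), Perm.sign_one, one_smul, mul_one,
    add_eq_zero_iff_eq_neg] at hrel
  rw [hrel]
  refine Submodule.neg_mem _ (Submodule.sum_mem _ fun τ hτ => ?_)
  obtain ⟨hτ1, hτs⟩ : τ ≠ 1 ∧ τ.support ⊆ s := by simpa using hτ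
  have hlt : toLex ⇑(σ * τ) < toLex ⇑σ :=
    toLex_mul_lt_of_strictAntiOn hanti (fun i hi => hτs (Perm.mem_support.mpr hi)) hτ1
  exact (Submodule.smul_mem_iff' _ _).mpr (ih _ hlt _ rfl)

theorem linearIndependent_permOp_avoidsDecreasing (d n : ℕ) :
    LinearIndependent ℂ
      fun σ : {σ : Perm (Fin n) // AvoidsDecreasing d σ} => permOp d n σ := by
  choose c hc using fun σ : {σ : Perm (Fin n) // AvoidsDecreasing d σ} =>
    σ.2.exists_strictMonoOnFibers
  -- The matrix coefficient that `permOp d n ρ` sends to `1`; it vanishes on `permOp d n σ` unless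
  -- `ρ⁻¹ * σ` preserves the colours of `ρ`, which forces `ρ ≤ σ` lexicographically.
  let φ (ρ : {σ : Perm (Fin n) // AvoidsDecreasing d σ}) :
      Module.Dual ℂ (Module.End ℂ ((Fin n → Fin d) → ℂ)) :=
    LinearMap.proj (c ρ ∘ ⇑(ρ.1⁻¹)) ∘ₗ LinearMap.applyₗ (Pi.single (c ρ) 1)
  have hφ (ρ) (σ : Perm (Fin n)) :
      φ ρ (permOp d n σ) = if (c ρ ∘ ⇑(ρ.1⁻¹)) ∘ σ = c ρ then 1 else 0 :=
    permOp_single_apply σ (c ρ ∘ ⇑(ρ.1⁻¹)) (c ρ)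
  refine linearIndependent_of_triangular
    (fun σ : {σ : Perm (Fin n) // AvoidsDecreasing d σ} => toLex ⇑σ.1) φ
    (fun ρ => ?_) fun ρ σ hne hρσ => ?_
  · rw [hφ, if_pos (by ext; simp)]
    exact one_ne_zero
  · have hcomp : (c ρ ∘ ⇑(ρ.1⁻¹)) ∘ σ.1 = c ρ := by
      by_contra hcomp
      exact hρσ ((hφ ρ σ).trans (if_neg hcomp))
    refine lt_of_le_of_ne ((hc ρ).toLex_le (congrFun hcomp)) fun h => hne ?_
    exact Subtype.ext (DFunLike.coe_injective (toLex.injective h))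

theorem finrank_span_range_permOp (d n : ℕ) :
    Module.finrank ℂ (Submodule.span ℂ (Set.range (permOp d n))) =
      Nat.card {σ : Perm (Fin n) // AvoidsDecreasing d σ} := by
  classical
  have hspan : Submodule.span ℂ (Set.range (permOp d n)) = Submodule.span ℂ
      (Set.range fun σ : {σ : Perm (Fin n) // AvoidsDecreasing d σ} => permOp d n σ) := by
    refine le_antisymm (Submodule.span_le.mpr ?_) (Submodule.span_mono ?_)
    · rintro _ ⟨σ, rfl⟩
      exact permOp_mem_span_avoidsDecreasing σ
    · rintro _ ⟨σ, rfl⟩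
      exact Set.mem_range_self σ.1
  rw [hspan, finrank_span_eq_card (linearIndependent_permOp_avoidsDecreasing d n),
    Nat.card_eq_fintype_card]

end LinearAlgebra

section Exceedances

variable {α : Type*} [LinearOrder α] {σ : Perm α} {s t : Finset α} {i j k : α}

theorem exists_lt_and_apply_lt_of_apply_le [Finite α] (hij : i < j) (hσ : σ j < σ i)
    (hi : σ i ≤ i) : ∃ k < i, σ i < σ k := by
  -- Otherwise `σ` maps `Iio i` onto `Iio (σ i)` by counting, which leaves no room for `σ j`.
  by_contra! hle
  have hsub : σ '' Set.Iio i ⊆ Set.Iio (σ i) := by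
    rintro _ ⟨k, hk, rfl⟩
    exact lt_of_le_of_ne (hle k hk) (σ.injective.ne (ne_of_lt hk))
  have hcard : (Set.Iio (σ i)).ncard ≤ (σ '' Set.Iio i).ncard := by
    rw [Set.ncard_image_of_injective _ σ.injective]
    exact Set.ncard_le_ncard (Set.Iio_subset_Iio hi)
  have hj : σ j ∈ σ '' Set.Iio i := by
    rwa [Set.eq_of_subset_of_ncard_le hsub hcard]
  exact hij.asymm (Set.mem_Iio.mp (σ.injective.mem_set_image.mp hj))

theorem exists_gt_and_apply_lt_of_le_apply [Finite α] (hij : i < j) (hσ : σ j < σ i)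
    (hj : j ≤ σ j) : ∃ k > j, σ k < σ j :=
  exists_lt_and_apply_lt_of_apply_le (α := αᵒᵈ) hij hσ hj

theorem not_avoidsDecreasing_two (hij : i < j) (hjk : j < k) (hσij : σ j < σ i)
    (hσjk : σ k < σ j) : ¬ AvoidsDecreasing 2 σ := by
  intro h
  have hanti : StrictAntiOn σ ({k, j, i} : Finset α) := by
    refine strictAntiOn_insert_of_forall_lt (strictAntiOn_insert_of_forall_lt ?_ ?_) ?_
    · simp
    · simp [hij, hσij]
    · simp [hjk, hσjk, hij.trans hjk, hσjk.trans hσij]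
  have hcard := h _ hanti
  rw [card_eq_three.mpr ⟨k, j, i, hjk.ne', (hij.trans hjk).ne', hij.ne', rfl⟩] at hcard
  omega

theorem avoidsDecreasing_two_iff [Finite α] :
    AvoidsDecreasing 2 σ ↔ StrictMonoOnFibers (fun i => i < σ i) σ := by
  refine ⟨fun h i j hc hij => ?_, fun h => Fintype.card_prop ▸ h.avoidsDecreasing⟩
  by_contra hle
  have hσ : σ j < σ i := lt_of_le_of_ne (not_lt.mp hle) (σ.injective.ne hij.ne')
  by_cases hi : i < σ i
  · have hj : j < σ j := hc.mp hi
    obtain ⟨k, hjk, hσk⟩ := exists_gt_and_apply_lt_of_le_apply hij hσ hj.le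
    exact not_avoidsDecreasing_two hij hjk hσ hσk h
  · obtain ⟨k, hki, hσk⟩ := exists_lt_and_apply_lt_of_apply_le hij hσ (not_lt.mp hi)
    exact not_avoidsDecreasing_two hki hij hσk hσ h

/-- The positions at which `σ` exceeds the identity. -/
def exceedancePositions [Fintype α] (σ : Perm α) : Finset α := {i | i < σ i}

/-- The values that `σ` takes at its exceedance positions. -/
def exceedanceValues [Fintype α] (σ : Perm α) : Finset α := {j | σ⁻¹ j < j}

@[simp]
theorem mem_exceedancePositions [Fintype α] : i ∈ exceedancePositions σ ↔ i < σ i := by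
  simp [exceedancePositions]

@[simp]
theorem mem_exceedanceValues [Fintype α] : j ∈ exceedanceValues σ ↔ σ⁻¹ j < j := by
  simp [exceedanceValues]

/-- `s` and `t` can be matched so that every element of `t` is larger than its partner in `s`, as
the exceedance positions and values of a permutation are; the matching condition is encoded by
counting. -/
def IsExceedancePair (s t : Finset α) : Prop :=
  #s = #t ∧ ∀ i, #{j ∈ t | j ≤ i} ≤ #{j ∈ s | j < i}

theorem isExceedancePair_exceedances [Fintype α] (σ : Perm α) :
    IsExceedancePair (exceedancePositions σ) (exceedanceValues σ) := by
  refine ⟨card_equiv σ (by simp), fun i => ?_⟩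
  refine card_le_card_of_injOn ⇑σ⁻¹ (fun j hj => ?_) σ⁻¹.injective.injOn
  obtain ⟨hj, hji⟩ : σ⁻¹ j < j ∧ j ≤ i := by simpa using hj
  simpa using ⟨hj, hj.trans_le hji⟩

theorem card_filter_lt_apply (hσ : StrictMonoOn σ s) (hst : ∀ j, σ j ∈ t ↔ j ∈ s) (hi : i ∈ s) :
    #{j ∈ t | j < σ i} = #{j ∈ s | j < i} := by
  refine (card_equiv σ fun j => ?_).symm
  simp only [mem_filter, hst]
  exact and_congr_right fun hj => (hσ.lt_iff_lt hj hi).symm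

theorem exists_strictMonoOnFibers_mem_iff [Finite α] (h : #s = #t) :
    ∃ σ : Perm α, StrictMonoOnFibers (· ∈ s) σ ∧ ∀ i, σ i ∈ t ↔ i ∈ s := by
  have := Fintype.ofFinite α
  have hcard : Fintype.card {i // i ∈ t} = Fintype.card {i // i ∈ s} := by simp [h]
  let e : {i // i ∈ s} ≃o {i // i ∈ t} :=
    (monoEquivOfFin _ rfl).symm.trans (monoEquivOfFin _ hcard)
  let e' : {i // i ∉ s} ≃o {i // i ∉ t} := (monoEquivOfFin _ rfl).symm.trans
    (monoEquivOfFin _ (Fintype.card_compl_eq_card_compl _ _ hcard))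
  let σ : Perm α := e.toEquiv.subtypeCongr e'.toEquiv
  have hσ {i : α} (hi : i ∈ s) : σ i = e ⟨i, hi⟩ := by
    simp [σ, Equiv.subtypeCongr, sumCompl_symm_apply_of_pos hi]
  have hσ' {i : α} (hi : i ∉ s) : σ i = e' ⟨i, hi⟩ := by
    simp [σ, Equiv.subtypeCongr, sumCompl_symm_apply_of_neg hi]
  refine ⟨σ, fun i j hij hlt => ?_, fun i => ?_⟩
  · by_cases hi : i ∈ s
    · rw [hσ hi, hσ (hij.mp hi)]
      exact e.strictMono hlt
    · rw [hσ' hi, hσ' (fun hj => hi (hij.mpr hj))]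
      exact e'.strictMono hlt
  · by_cases hi : i ∈ s
    · simp [hσ hi, hi]
    · simpa [hσ' hi, hi] using (e' ⟨i, hi⟩).2

theorem card_filter_lt_lt_card_filter_le (hi : i ∈ s) : #{j ∈ s | j < i} < #{j ∈ s | j ≤ i} := by
  refine card_lt_card ⟨monotone_filter_right _ fun j _ => le_of_lt, fun hsub => ?_⟩
  have hmem : i ∈ {j ∈ s | j < i} := hsub (mem_filter.mpr ⟨hi, le_rfl⟩)
  exact lt_irrefl i (mem_filter.mp hmem).2

theorem card_filter_add_card_filter_compl {ι : Type*} [Fintype ι] [DecidableEq ι] (s : Finset ι)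
    (p : ι → Prop) [DecidablePred p] : #{j ∈ s | p j} + #{j ∈ sᶜ | p j} = #{j | p j} := by
  rw [← card_union_of_disjoint (disjoint_filter_filter disjoint_compl_right), ← filter_union,
    union_compl]

theorem IsExceedancePair.lt_apply (h : IsExceedancePair s t) (hσ : StrictMonoOn σ s)
    (hst : ∀ j, σ j ∈ t ↔ j ∈ s) (hi : i ∈ s) : i < σ i := by
  have hpair : #{j ∈ s | j < i} < #{j ∈ s | j < σ i} :=
    calc #{j ∈ s | j < i} = #{j ∈ t | j < σ i} := (card_filter_lt_apply hσ hst hi).symm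
      _ < #{j ∈ t | j ≤ σ i} := card_filter_lt_lt_card_filter_le ((hst i).mpr hi)
      _ ≤ #{j ∈ s | j < σ i} := h.2 (σ i)
  by_contra hle
  refine hpair.not_ge (card_le_card (monotone_filter_right _ fun j _ hj => ?_))
  exact lt_of_lt_of_le hj (not_lt.mp hle)

theorem IsExceedancePair.apply_le [Fintype α] (h : IsExceedancePair s t)
    (hσ : StrictMonoOn σ (sᶜ : Finset α)) (hst : ∀ j, σ j ∈ t ↔ j ∈ s) (hi : i ∉ s) :
    σ i ≤ i := by
  by_contra! hlt
  have hcompl : #{j ∈ tᶜ | j ≤ i} ≤ #{j ∈ sᶜ | j < i} := by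
    rw [← card_filter_lt_apply (t := tᶜ) hσ (by simp [hst]) (mem_compl.mpr hi)]
    exact card_le_card (monotone_filter_right _ fun j _ hj => lt_of_le_of_lt hj hlt)
  have hle : #{j | j ≤ i} ≤ #{j | j < i} := by
    rw [← card_filter_add_card_filter_compl t, ← card_filter_add_card_filter_compl s]
    exact Nat.add_le_add (h.2 i) hcompl
  exact hle.not_gt (card_filter_lt_lt_card_filter_le (mem_univ i))

theorem IsExceedancePair.lt_apply_iff [Finite α] (h : IsExceedancePair s t)
    (hσ : StrictMonoOnFibers (· ∈ s) σ) (hst : ∀ j, σ j ∈ t ↔ j ∈ s) : i < σ i ↔ i ∈ s := by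
  have := Fintype.ofFinite α
  refine ⟨fun hlt => ?_, h.lt_apply (fun j hj k hk => hσ (by simp_all)) hst⟩
  by_contra hi
  exact hlt.not_ge (h.apply_le (fun j hj k hk => hσ (by simp_all)) hst hi)

theorem bijective_exceedances (α : Type*) [LinearOrder α] [Fintype α] :
    Function.Bijective fun σ : {σ : Perm α // AvoidsDecreasing 2 σ} =>
      (⟨(exceedancePositions σ.1, exceedanceValues σ.1), isExceedancePair_exceedances σ.1⟩ :
        {p : Finset α × Finset α // IsExceedancePair p.1 p.2}) := by
  constructor
  · rintro ⟨σ, hσ⟩ ⟨ρ, hρ⟩ h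
    obtain ⟨hpos, hval⟩ := Prod.mk.inj (Subtype.mk.inj h)
    have hlt (i : α) : i < ρ i ↔ i < σ i := by simpa using (Finset.ext_iff.mp hpos i).symm
    rw [avoidsDecreasing_two_iff] at hσ hρ
    simp only [hlt] at hρ
    refine Subtype.ext (hσ.eq hρ fun i => propext ?_)
    rw [← hlt]
    simpa using (Finset.ext_iff.mp hval (σ i)).symm
  · rintro ⟨⟨s, t⟩, h⟩
    obtain ⟨σ, hσ, hst⟩ := exists_strictMonoOnFibers_mem_iff h.1
    have hlt (i : α) : i < σ i ↔ i ∈ s := h.lt_apply_iff hσ hst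
    have hav : AvoidsDecreasing 2 σ := by
      simpa only [avoidsDecreasing_two_iff, hlt] using hσ
    refine ⟨⟨σ, hav⟩, Subtype.ext (Prod.ext (by ext; simp [hlt]) (Finset.ext fun j => ?_))⟩
    simpa using (hlt (σ⁻¹ j)).trans (hst (σ⁻¹ j)).symm

end Exceedances

section DyckWords

open DyckStep

variable {n : ℕ} {w w' : List DyckStep} {s t : Finset (Fin n)}

/-- The `j` at which the word `w` opens. Each `j : Fin n` owns the steps `2 * j` and `2 * j + 1` of
a word of length `2 * n`: it closes if the former is `D` and opens if the latter is `U`. Closing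
comes first because an exceedance position is strictly smaller than its value. -/
def openers (n : ℕ) (w : List DyckStep) : Finset (Fin n) := {j | w[2 * j.val + 1]? = some U}

/-- The `j` at which the word `w` closes, see `openers`; a step missing from a shorter word
also counts as closing. -/
def closers (n : ℕ) (w : List DyckStep) : Finset (Fin n) := {j | w[2 * j.val]? ≠ some U}

theorem card_filter_fin_lt (p : ℕ → Prop) [DecidablePred p] {m : ℕ} (hm : m ≤ n) :
    #{j ∈ {j : Fin n | p j} | j.val < m} = Nat.count p m := by
  rw [Nat.count_eq_card_filter_range, ← card_map Fin.valEmbedding]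
  congr 1
  ext j
  simp only [mem_map, mem_filter, mem_univ, true_and, Fin.valEmbedding_apply, mem_range]
  exact ⟨by rintro ⟨i, hi, rfl⟩; exact hi.symm, fun h => ⟨⟨j, h.1.trans_le hm⟩, h.symm, rfl⟩⟩

theorem count_take_eq_natCount {γ : Type*} [DecidableEq γ] (l : List γ) (a : γ) (k : ℕ) :
    (l.take k).count a = Nat.count (fun i => l[i]? = some a) k := by
  induction k with
  | zero => simp
  | succ k ih =>
    rw [List.take_add_one, List.count_append, ih, Nat.count_succ]
    cases l[k]? <;> simp [List.count_singleton']

theorem natCount_two_mul_add (p : ℕ → Prop) [DecidablePred p] (m : ℕ) :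
    Nat.count p (2 * m) + Nat.count (fun j => ¬ p (2 * j)) m =
      Nat.count (fun j => p (2 * j + 1)) m + m := by
  induction m with
  | zero => simp
  | succ m ih =>
    rw [mul_add_one, ← add_assoc, Nat.count_succ, Nat.count_succ, Nat.count_succ, Nat.count_succ]
    split_ifs <;> omega

theorem natCount_two_mul_add_one_add (p : ℕ → Prop) [DecidablePred p] (m : ℕ) :
    Nat.count p (2 * m + 1) + Nat.count (fun j => ¬ p (2 * j)) (m + 1) =
      Nat.count (fun j => p (2 * j + 1)) m + m + 1 := by
  rw [← natCount_two_mul_add, Nat.count_succ, Nat.count_succ]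
  split_ifs <;> omega

theorem count_U_take_two_mul_add (w : List DyckStep) {m : ℕ} (hm : m ≤ n) :
    (w.take (2 * m)).count U + #{j ∈ closers n w | j.val < m} =
      #{j ∈ openers n w | j.val < m} + m := by
  rw [count_take_eq_natCount, openers, closers,
    card_filter_fin_lt (fun j => w[2 * j]? ≠ some U) hm,
    card_filter_fin_lt (fun j => w[2 * j + 1]? = some U) hm]
  exact natCount_two_mul_add _ m

theorem count_U_take_two_mul_add_one_add (w : List DyckStep) {m : ℕ} (hm : m < n) :
    (w.take (2 * m + 1)).count U + #{j ∈ closers n w | j.val < m + 1} =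
      #{j ∈ openers n w | j.val < m} + m + 1 := by
  rw [count_take_eq_natCount, openers, closers,
    card_filter_fin_lt (fun j => w[2 * j]? ≠ some U) hm,
    card_filter_fin_lt (fun j => w[2 * j + 1]? = some U) hm.le]
  exact natCount_two_mul_add_one_add _ m

theorem count_U_add_count_D (w : List DyckStep) : w.count U + w.count D = w.length := by
  induction w with
  | nil => rfl
  | cons a w ih => cases a <;> simp [← ih] <;> omega

theorem count_U_take_add_count_D_take {k : ℕ} (hk : k ≤ w.length) :
    (w.take k).count U + (w.take k).count D = k := by
  rw [count_U_add_count_D, List.length_take, min_eq_left hk]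

theorem count_D_take_le_count_U_take_of_odd (hw : w.count U = w.count D)
    (hodd : ∀ m, 2 * m < w.length →
      (w.take (2 * m + 1)).count D ≤ (w.take (2 * m + 1)).count U) (k : ℕ) :
    (w.take k).count D ≤ (w.take k).count U := by
  rcases le_or_gt w.length k with hk | hk
  · rw [List.take_of_length_le hk, hw]
  obtain ⟨m, rfl | rfl⟩ := Nat.even_or_odd' k
  · have hmono : (w.take (2 * m)).count D ≤ (w.take (2 * m + 1)).count D :=
      (List.take_sublist_take_left (Nat.le_succ _)).count_le D
    have hnext := hodd m hk
    have heven := count_U_take_add_count_D_take hk.le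
    have hsucc := count_U_take_add_count_D_take (k := 2 * m + 1) hk
    omega
  · exact hodd m (Nat.lt_of_succ_lt hk)

theorem isExceedancePair_iff_forall_lt :
    IsExceedancePair s t ↔
      #s = #t ∧ ∀ m < n, #{j ∈ t | j.val < m + 1} ≤ #{j ∈ s | j.val < m} := by
  simp only [IsExceedancePair, Fin.forall_iff, Fin.lt_def, Fin.le_def, Nat.lt_succ_iff]

theorem isExceedancePair_openers_closers_iff (hw : w.length = 2 * n) :
    IsExceedancePair (openers n w) (closers n w) ↔
      w.count U = w.count D ∧ ∀ k, (w.take k).count D ≤ (w.take k).count U := by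
  have hlt (s : Finset (Fin n)) : #{j ∈ s | j.val < n} = #s := by simp
  have hcount : w.count U = w.count D ↔ #(openers n w) = #(closers n w) := by
    have hU := count_U_take_two_mul_add w (le_refl n)
    have hUD := count_U_add_count_D w
    rw [hlt, hlt, ← hw, List.take_length] at hU
    omega
  have hodd {m : ℕ} (hm : m < n) :
      (w.take (2 * m + 1)).count D ≤ (w.take (2 * m + 1)).count U ↔
        #{j ∈ closers n w | j.val < m + 1} ≤ #{j ∈ openers n w | j.val < m} := by
    have hU := count_U_take_two_mul_add_one_add w hm
    have hUD := count_U_take_add_count_D_take (w := w) (k := 2 * m + 1) (by omega)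
    omega
  rw [isExceedancePair_iff_forall_lt, hcount]
  refine and_congr_right fun hcard => ⟨fun h => ?_, fun h m hm => (hodd hm).mp (h _)⟩
  refine count_D_take_le_count_U_take_of_odd (hcount.mpr hcard) fun m hm => ?_
  have hmn : m < n := by omega
  exact (hodd hmn).mpr (h m hmn)

theorem eq_of_openers_eq_of_closers_eq (hw : w.length = 2 * n) (hw' : w'.length = 2 * n)
    (ho : openers n w = openers n w') (hc : closers n w = closers n w') : w = w' := by
  have hU (i : ℕ) (hi : i < 2 * n) : w[i]? = some U ↔ w'[i]? = some U := by
    rcases Nat.even_or_odd' i with ⟨j, rfl | rfl⟩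
    · simpa [closers, not_iff_not] using Finset.ext_iff.mp hc ⟨j, by omega⟩
    · simpa [openers] using Finset.ext_iff.mp ho ⟨j, by omega⟩
  refine List.ext_getElem (hw.trans hw'.symm) fun i hi hi' => ?_
  have hiff : w[i] = U ↔ w'[i] = U := by simpa [hi, hi'] using hU i (hw ▸ hi)
  rcases w[i].dichotomy with h | h <;> rcases w'[i].dichotomy with h' | h' <;> simp_all

theorem exists_openers_eq_closers_eq (s t : Finset (Fin n)) :
    ∃ w : List DyckStep, w.length = 2 * n ∧ openers n w = s ∧ closers n w = t := by
  let step (i : Fin (2 * n)) : DyckStep :=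
    let j : Fin n := ⟨i / 2, by omega⟩
    if i.val % 2 = 0 then if j ∈ t then D else U else if j ∈ s then U else D
  refine ⟨List.ofFn step, List.length_ofFn, ?_, ?_⟩
  · ext j
    have hj : 2 * j.val + 1 < 2 * n := by omega
    have hdiv : (2 * j.val + 1) / 2 = j := by omega
    simp [openers, step, List.getElem?_ofFn, hj, hdiv, Nat.add_mod]
  · ext j
    simp [closers, step]

theorem card_isExceedancePair (n : ℕ) :
    Nat.card {p : Finset (Fin n) × Finset (Fin n) // IsExceedancePair p.1 p.2} = catalan n := by
  have hlen (w : {w : DyckWord // w.semilength = n}) : w.1.toList.length = 2 * n := by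
    rw [← w.1.two_mul_semilength_eq_length, w.2]
  rw [← DyckWord.card_dyckWord_semilength_eq_catalan n, ← Nat.card_eq_fintype_card]
  refine (Nat.card_eq_of_bijective (fun w => ⟨(openers n w.1.toList, closers n w.1.toList),
    (isExceedancePair_openers_closers_iff (hlen w)).mpr
      ⟨w.1.count_U_eq_count_D, w.1.count_D_le_count_U⟩⟩) ⟨fun w w' h => ?_, ?_⟩).symm
  · obtain ⟨ho, hc⟩ := Prod.mk.inj (Subtype.mk.inj h)
    exact Subtype.ext (DyckWord.ext
      (eq_of_openers_eq_of_closers_eq (hlen w) (hlen w') ho hc))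
  · rintro ⟨⟨s, t⟩, h⟩
    obtain ⟨w, hw, rfl, rfl⟩ := exists_openers_eq_closers_eq s t
    obtain ⟨hcount, hle⟩ := (isExceedancePair_openers_closers_iff hw).mp h
    let p : DyckWord := ⟨w, hcount, hle⟩
    have hp : p.semilength = n := by
      have := p.two_mul_semilength_eq_length.trans hw
      omega
    exact ⟨⟨p, hp⟩, rfl⟩

end DyckWords

end

/-- The 2-swap algebra `Σₙ`, the span in `End(V^⊗n)` (`dim V = 2`) of the operators
induced by permutations, has dimension the `n`-th Catalan number `C_n`. -/
theorem swapAlgebra_dim_eq_catalan (n : ℕ) :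
    Module.finrank ℂ (Submodule.span ℂ (Set.range (permOp 2 n))) = catalan n := by
  rw [finrank_span_range_permOp, Nat.card_eq_of_bijective _ (bijective_exceedances (Fin n)),
    card_isExceedancePair]
end

section
/- For every n, the swap algebra Σ_n (dim V = 2) is spanned by the operators induced by special permutations: those whose cycle decomposition consists only of cycles of length 1 and 2, together with at most one cycle of length 3. -/
/-- A permutation is special if all its cycles have length at most 2 (fixed points and
transpositions) together with at most one 3-cycle. -/
def IsSpecial {n : ℕ} (τ : Equiv.Perm (Fin n)) : Prop :=
  (∀ i ∈ τ.cycleType, i ≤ 3) ∧ Multiset.count 3 τ.cycleType ≤ 1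

/-!
As `dim V = 2`, the antisymmetrizer of any three tensor factors vanishes. Filter the swap algebra by
reflection length, the number of points minus the number of cycles. Multiplying the antisymmetrizer
by a shorter cycle shows that, modulo the `m`-th step of the filtration, a cycle of length `2 * m`
changes sign when one entry `x` moves past the next. Carrying `x` once around the cycle takes an odd
number `2 * m - 1` of moves, so twice the cycle vanishes modulo that step, although its reflection
length is `2 * m - 1`. Hence every cycle of length at least four drops in the filtration, and the
antisymmetrizer turns a product of two disjoint 3-cycles into products that drop as well. The
remaining permutations are the special ones.
-/

open Equiv

section ReflectionLength

variable {α : Type*}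

/-- The reflection length of a permutation `σ` of a finite set (the number of points minus the
number of cycles), encoded as the codimension of the space of `σ`-invariant functions. -/
noncomputable def reflectionLength (σ : Perm α) : ℕ :=
  Module.finrank ℚ (LinearMap.range (LinearMap.funLeft ℚ ℚ σ - LinearMap.id))

theorem reflectionLength_one : reflectionLength (1 : Perm α) = 0 := by
  have : LinearMap.funLeft ℚ ℚ (1 : Perm α) = LinearMap.id := rfl
  rw [reflectionLength, this, sub_self, LinearMap.range_zero, finrank_bot]

theorem reflectionLength_mul_le [Finite α] (σ τ : Perm α) :
    reflectionLength (σ * τ) ≤ reflectionLength σ + reflectionLength τ := by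
  rw [add_comm]
  refine (Submodule.finrank_mono ?_).trans (Submodule.finrank_add_le_finrank_add_finrank _ _)
  rintro _ ⟨f, rfl⟩
  refine Submodule.mem_sup.2 ⟨_, ⟨f ∘ σ, rfl⟩, _, ⟨f, rfl⟩, ?_⟩
  exact sub_add_sub_cancel ((f ∘ σ) ∘ τ) (f ∘ σ) f

variable [DecidableEq α]

theorem reflectionLength_swap_le (a b : α) : reflectionLength (swap a b) ≤ 1 := by
  have hspan : LinearMap.range (LinearMap.funLeft ℚ ℚ (swap a b) - LinearMap.id) ≤
      Submodule.span ℚ {(Pi.single a 1 - Pi.single b 1 : α → ℚ)} := by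
    rintro _ ⟨f, rfl⟩
    refine Submodule.mem_span_singleton.2 ⟨f b - f a, funext fun x => ?_⟩
    rcases eq_or_ne x a with rfl | ha
    · rcases eq_or_ne x b with rfl | hb <;> simp [LinearMap.funLeft_apply, *]
    · rcases eq_or_ne x b with rfl | hb <;>
        simp [LinearMap.funLeft_apply, swap_apply_of_ne_of_ne, *]
  exact (Submodule.finrank_mono hspan).trans ((finrank_span_le_card _).trans (by simp))

-- Multiplying by `swap a (σ a)` splits `a` off its cycle.
theorem reflectionLength_swap_mul_lt [Finite α] {σ : Perm α} {a : α} (ha : σ a ≠ a) :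
    reflectionLength (swap a (σ a) * σ) < reflectionLength σ := by
  set τ := swap a (σ a) * σ with hτ
  have hτa : τ a = a := by simp [hτ]
  refine Submodule.finrank_lt_finrank_of_lt (SetLike.lt_iff_le_and_exists.2 ⟨?_, ?_⟩)
  · rintro _ ⟨f, rfl⟩
    refine ⟨Function.update f a (f (σ a)), funext fun x => ?_⟩
    rcases eq_or_ne x a with rfl | hx
    · simp [LinearMap.funLeft_apply, hτa, ha]
    · have hσx : σ x ≠ σ a := σ.injective.ne hx
      rcases eq_or_ne (σ x) a with h | h <;>
        simp [LinearMap.funLeft_apply, swap_apply_of_ne_of_ne, *]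
  · refine ⟨_, ⟨Pi.single a 1, rfl⟩, ?_⟩
    rintro ⟨f, hf⟩
    have := congrFun hf a
    simp [LinearMap.funLeft_apply, hτa, ha] at this

theorem reflectionLength_formPerm_inv_mul_add_length_le [Finite α] (l : List α) (σ : Perm α)
    (hl : l.Nodup) (hσ : l.IsChain fun a b => σ a = b) :
    reflectionLength (l.formPerm⁻¹ * σ) + l.length ≤ reflectionLength σ + 1 := by
  induction l generalizing σ with
  | nil => simp
  | cons x l ih =>
    cases l with
    | nil => simp
    | cons y t =>
      obtain ⟨rfl, hchain⟩ := List.isChain_cons_cons.1 hσ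
      obtain ⟨hx, ht⟩ := List.nodup_cons.1 hl
      have hchain' : (σ x :: t).IsChain fun a b => (swap x (σ x) * σ) a = b :=
        hchain.imp_of_mem_tail_imp fun a b _ hb hab => by
          rw [Perm.mul_apply, hab, swap_apply_of_ne_of_ne]
          · exact fun h => hx (h ▸ List.mem_cons_of_mem _ hb)
          · exact fun h => (List.nodup_cons.1 ht).1 (h ▸ hb)
      have hlt := reflectionLength_swap_mul_lt (List.ne_of_not_mem_cons hx).symm
      have := ih _ ht hchain'
      rw [List.formPerm_cons_cons, mul_inv_rev, swap_inv, mul_assoc, List.length_cons]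
      omega

end ReflectionLength

theorem isChain_toList {α : Type*} [Fintype α] [DecidableEq α] (σ : Perm α) (x : α) :
    (σ.toList x).IsChain fun a b => σ a = b := by
  refine List.isChain_iff_getElem.2 fun i _ => ?_
  rw [Perm.getElem_toList, Perm.getElem_toList, pow_succ', Perm.mul_apply]

theorem swap_mul_swap_rotate {α : Type*} [DecidableEq α] {p q r : α} (hpq : p ≠ q) (hpr : p ≠ r) :
    swap p q * swap q r = swap q r * swap r p := by
  rw [swap_mul_eq_mul_swap, swap_inv, swap_apply_left, swap_apply_of_ne_of_ne hpq hpr,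
    swap_comm p r]

section Filtration

variable {α R A : Type*} [CommRing R] [Ring A] [Algebra R A] (φ : Perm α →* A)

variable (R) in
/-- The filtration of the image of the group algebra under `φ` by reflection length. -/
def lengthFiltration (k : ℕ) : Submodule R A :=
  Submodule.span R (φ '' {σ | reflectionLength σ ≤ k})

variable {φ}

theorem apply_mem_lengthFiltration {σ : Perm α} {k : ℕ} (h : reflectionLength σ ≤ k) :
    φ σ ∈ lengthFiltration R φ k :=
  Submodule.subset_span ⟨σ, h, rfl⟩

theorem one_mem_lengthFiltration (k : ℕ) : 1 ∈ lengthFiltration R φ k := by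
  rw [← map_one φ]
  exact apply_mem_lengthFiltration (reflectionLength_one.trans_le k.zero_le)

theorem swap_mem_lengthFiltration_one [DecidableEq α] (a b : α) :
    φ (swap a b) ∈ lengthFiltration R φ 1 :=
  apply_mem_lengthFiltration (reflectionLength_swap_le a b)

theorem lengthFiltration_mono : Monotone (lengthFiltration R φ) := fun _ _ hjk =>
  Submodule.span_mono (Set.image_mono fun _ hσ => le_trans hσ hjk)

theorem mul_mem_lengthFiltration [Finite α] {j k : ℕ} {a b : A} (ha : a ∈ lengthFiltration R φ j)
    (hb : b ∈ lengthFiltration R φ k) : a * b ∈ lengthFiltration R φ (j + k) := by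
  have hle : lengthFiltration R φ j * lengthFiltration R φ k ≤ lengthFiltration R φ (j + k) := by
    rw [lengthFiltration, lengthFiltration, Submodule.span_mul_span]
    refine Submodule.span_mono ?_
    rintro _ ⟨_, ⟨σ, hσ, rfl⟩, _, ⟨τ, hτ, rfl⟩, rfl⟩
    exact ⟨σ * τ, (reflectionLength_mul_le σ τ).trans (add_le_add hσ hτ), map_mul φ σ τ⟩
  exact hle (Submodule.mul_mem_mul ha hb)

theorem swap_mul_mem_lengthFiltration [Finite α] [DecidableEq α] (a b : α) {σ : Perm α} {k : ℕ}
    (hσ : φ σ ∈ lengthFiltration R φ k) : φ (swap a b * σ) ∈ lengthFiltration R φ (k + 1) := by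
  rw [map_mul, add_comm]
  exact mul_mem_lengthFiltration (swap_mem_lengthFiltration_one a b) hσ

end Filtration

theorem sub_neg_one_pow_smul_mem {R M : Type*} [CommRing R] [AddCommGroup M] [Module R M]
    {N : Submodule R M} {f : ℕ → M} (hf : ∀ k, f k + f (k + 1) ∈ N) (k : ℕ) :
    f k - (-1 : R) ^ k • f 0 ∈ N := by
  induction k with
  | zero => simp
  | succ k ih =>
    convert N.sub_mem (hf k) ih using 1
    rw [pow_succ]
    module

section Antisymmetrizer

variable {α A : Type*} [DecidableEq α] [Ring A]

/-- `φ` sends to zero the antisymmetrizer of every three distinct points. -/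
def KillsAntisymmetrizers (φ : Perm α →* A) : Prop :=
  ∀ ⦃p q r : α⦄, p ≠ q → q ≠ r → p ≠ r →
    1 + φ (swap p q * swap q r) + φ (swap q r * swap p q) =
      φ (swap p q) + φ (swap q r) + φ (swap p r)

theorem KillsAntisymmetrizers.apply_swap_mul_swap_mul {φ : Perm α →* A}
    (hφ : KillsAntisymmetrizers φ) {a b c d : α} (hab : a ≠ b) (hac : a ≠ c) (hbc : b ≠ c)
    (hbd : b ≠ d) (hcd : c ≠ d) (π : Perm α) :
    φ (swap a b * (swap b c * π)) =
      φ (swap a b * π) + φ (swap a b * (swap b c * (swap c d * π))) +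
        φ (swap c a * (swap a b * (swap b d * π))) -
        φ (swap a b * (swap c d * π)) - φ (swap a b * (swap b d * π)) := by
  have hrotate : swap a b * swap b c = swap c a * swap a b := by
    rw [swap_mul_swap_rotate hab hac, swap_mul_swap_rotate hbc hab.symm]
  have hconj : swap b c * (swap c d * swap b c) = swap b d := by
    rw [← mul_assoc, swap_comm b c, swap_comm c d, swap_mul_swap_mul_swap hcd.symm hbd.symm]
  have hconj_mul : swap b c * (swap c d * (swap b c * π)) = swap b d * π := by
    rw [← hconj, mul_assoc, mul_assoc]
  have hrotate_mul : swap a b * (swap b c * (swap b d * π)) =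
      swap c a * (swap a b * (swap b d * π)) := by
    rw [← mul_assoc, hrotate, mul_assoc]
  have hrel := congrArg (fun X => φ (swap a b * swap b c) * X * φ π) (hφ hbc hcd hbd)
  simp only [mul_add, add_mul, ← map_mul, mul_one, mul_assoc, swap_mul_self_mul, hconj_mul,
    hrotate_mul] at hrel
  linear_combination (norm := abel) hrel

variable {R : Type*} [CommRing R] [Algebra R A] [Finite α] {φ : Perm α →* A}

theorem formPerm_add_formPerm_mem_lengthFiltration (hφ : KillsAntisymmetrizers φ) {x y z : α}
    {t : List α} {k : ℕ} (hl : (x :: y :: z :: t).Nodup)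
    (ht : φ (z :: t).formPerm ∈ lengthFiltration R φ k) :
    φ (x :: y :: z :: t).formPerm + φ (y :: x :: z :: t).formPerm ∈
      lengthFiltration R φ (k + 1) := by
  have hxy : x ≠ y := by grind
  have hyz : y ≠ z := by grind
  have hxz : x ≠ z := by grind
  have hinv : swap y x * swap x z = swap y z * swap x y := by
    rw [swap_comm y z, swap_comm x y, swap_mul_swap_rotate hyz.symm hxz.symm]
  have hsum : φ (swap x y * swap y z) + φ (swap y x * swap x z) =
      φ (swap x y) + φ (swap y z) + φ (swap x z) - 1 := by
    rw [hinv, ← hφ hxy hyz hxz]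
    abel
  have hmem : φ (swap x y * swap y z) + φ (swap y x * swap x z) ∈ lengthFiltration R φ 1 := by
    rw [hsum]
    exact sub_mem (add_mem (add_mem (swap_mem_lengthFiltration_one _ _)
      (swap_mem_lengthFiltration_one _ _)) (swap_mem_lengthFiltration_one _ _))
      (one_mem_lengthFiltration 1)
  have := mul_mem_lengthFiltration hmem ht
  rwa [add_mul, ← map_mul, ← map_mul, mul_assoc, mul_assoc, add_comm 1 k] at this

theorem formPerm_cons_add_formPerm_cons_rotate_mem_lengthFiltration
    (hφ : KillsAntisymmetrizers φ) {x : α} {l : List α} {k : ℕ} (hl : (x :: l).Nodup)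
    (hlen : 2 ≤ l.length) (htail : φ l.tail.formPerm ∈ lengthFiltration R φ k) :
    φ (x :: l).formPerm + φ (x :: l.rotate 1).formPerm ∈ lengthFiltration R φ (k + 1) := by
  obtain ⟨y, z, t, rfl⟩ : ∃ y z t, l = y :: z :: t := by
    match l, hlen with
    | y :: z :: t, _ => exact ⟨y, z, t, rfl⟩
  have hrot : (x :: (y :: z :: t).rotate 1).formPerm = (y :: x :: z :: t).formPerm := by
    rw [← List.formPerm_rotate_one _ ((List.Perm.swap y x _).nodup hl)]
    simp
  exact hrot ▸ formPerm_add_formPerm_mem_lengthFiltration hφ hl htail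

theorem formPerm_mem_lengthFiltration_of_length_eq (h2 : IsUnit (2 : R))
    (hφ : KillsAntisymmetrizers φ) {m : ℕ} {l : List α} (hl : l.Nodup) (hlen : l.length = 2 * m) :
    φ l.formPerm ∈ lengthFiltration R φ m := by
  induction m generalizing l with
  | zero =>
    obtain rfl : l = [] := List.length_eq_zero_iff.1 hlen
    exact map_one φ ▸ one_mem_lengthFiltration 0
  | succ m ih =>
    obtain ⟨x, u, rfl⟩ := List.exists_cons_of_length_eq_add_one hlen
    have hu : u.length = 2 * m + 1 := by simpa [mul_add] using hlen
    obtain rfl | hm := m.eq_zero_or_pos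
    · obtain ⟨y, rfl⟩ := List.length_eq_one_iff.1 hu
      exact List.formPerm_pair x y ▸ swap_mem_lengthFiltration_one x y
    have hrot (k : ℕ) : φ (x :: u.rotate k).formPerm + φ (x :: u.rotate (k + 1)).formPerm ∈
        lengthFiltration R φ (m + 1) := by
      have hnodup : (x :: u.rotate k).Nodup := (((u.rotate_perm k).cons x).nodup_iff).2 hl
      rw [← List.rotate_rotate]
      exact formPerm_cons_add_formPerm_cons_rotate_mem_lengthFiltration hφ hnodup
        (by rw [List.length_rotate]; omega) (ih hnodup.of_cons.tail (by simp [hu]))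
    have h := sub_neg_one_pow_smul_mem hrot u.length
    rw [List.rotate_length, List.rotate_zero, hu, (odd_two_mul_add_one m).neg_one_pow, neg_smul,
      one_smul, sub_neg_eq_add, ← two_smul R] at h
    exact (Submodule.smul_mem_iff_of_isUnit _ h2).1 h

theorem formPerm_mem_lengthFiltration_of_length_le (h2 : IsUnit (2 : R))
    (hφ : KillsAntisymmetrizers φ) {m : ℕ} {l : List α} (hl : l.Nodup) (hlen : l.length ≤ 2 * m) :
    φ l.formPerm ∈ lengthFiltration R φ m := by
  obtain ⟨j, hj | hj⟩ := l.length.even_or_odd'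
  · exact lengthFiltration_mono (by omega) (formPerm_mem_lengthFiltration_of_length_eq h2 hφ hl hj)
  · refine lengthFiltration_mono (by omega : j + 1 ≤ m) ?_
    match l with
    | [x] => exact List.formPerm_singleton x ▸ map_one φ ▸ one_mem_lengthFiltration _
    | x :: y :: t =>
      exact swap_mul_mem_lengthFiltration x y
        (formPerm_mem_lengthFiltration_of_length_eq h2 hφ hl.of_cons (by simpa using hj))

-- By the antisymmetrizer of `b, c, d`, placed between the two factors, the product is a combination
-- of cycles through all the points and of transpositions times shorter cycles.
theorem three_cycle_mul_formPerm_mem_lengthFiltration (h2 : IsUnit (2 : R))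
    (hφ : KillsAntisymmetrizers φ) {m : ℕ} {a b c d : α} {t : List α}
    (hl : (a :: b :: c :: d :: t).Nodup) (hlen : t.length ≤ 2 * m) :
    φ ([a, b, c].formPerm * (d :: t).formPerm) ∈ lengthFiltration R φ (m + 2) := by
  set π := (d :: t).formPerm
  obtain ⟨hab, hac, hbc, hbd, hcd⟩ : a ≠ b ∧ a ≠ c ∧ b ≠ c ∧ b ≠ d ∧ c ≠ d := by grind
  have cycle_mem {l : List α} {j : ℕ} (hl : l.Nodup) (hlj : l.length ≤ 2 * j) :
      φ l.formPerm ∈ lengthFiltration R φ j :=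
    formPerm_mem_lengthFiltration_of_length_le h2 hφ hl hlj
  have hswap : φ (swap a b * π) ∈ lengthFiltration R φ (m + 2) :=
    swap_mul_mem_lengthFiltration a b (cycle_mem (by grind) (by grind))
  have hswap_cd : φ (swap a b * (swap c d * π)) ∈ lengthFiltration R φ (m + 2) :=
    swap_mul_mem_lengthFiltration a b (cycle_mem (l := c :: d :: t) (by grind) (by grind))
  have hswap_bd : φ (swap a b * (swap b d * π)) ∈ lengthFiltration R φ (m + 2) :=
    swap_mul_mem_lengthFiltration a b (cycle_mem (l := b :: d :: t) (by grind) (by grind))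
  have hcycle_abc : φ (swap a b * (swap b c * (swap c d * π))) ∈ lengthFiltration R φ (m + 2) :=
    cycle_mem (l := a :: b :: c :: d :: t) (by grind) (by grind)
  have hcycle_cab : φ (swap c a * (swap a b * (swap b d * π))) ∈ lengthFiltration R φ (m + 2) :=
    cycle_mem (l := c :: a :: b :: d :: t) (by grind) (by grind)
  rw [List.formPerm_cons_cons, List.formPerm_pair, mul_assoc,
    hφ.apply_swap_mul_swap_mul hab hac hbc hbd hcd π]
  exact sub_mem (sub_mem (add_mem (add_mem hswap hcycle_abc) hcycle_cab) hswap_cd) hswap_bd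

end Antisymmetrizer

section CycleType

variable {α : Type*} [Fintype α] [DecidableEq α] {σ : Perm α} {k : ℕ}

theorem exists_cycleOf_eq_of_mem_cycleFactorsFinset {c : Perm α} (hc : c ∈ σ.cycleFactorsFinset) :
    ∃ x, σ.cycleOf x = c :=
  have ⟨x, hx⟩ := (Perm.mem_cycleFactorsFinset_iff.1 hc).1.nonempty_support
  ⟨x, (Perm.cycle_is_cycleOf hx hc).symm⟩

theorem exists_length_toList_eq_of_mem_cycleType (hk : k ∈ σ.cycleType) :
    ∃ x, (σ.toList x).length = k := by
  obtain ⟨c, hc, rfl⟩ := Multiset.mem_map.1 (Perm.cycleType_def σ ▸ hk)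
  obtain ⟨x, rfl⟩ := exists_cycleOf_eq_of_mem_cycleFactorsFinset hc
  exact ⟨x, Perm.length_toList σ x⟩

theorem exists_disjoint_toList_of_one_lt_count_cycleType (hk : 1 < σ.cycleType.count k) :
    ∃ x y, (σ.toList x).length = k ∧ (σ.toList y).length = k ∧
      (σ.toList x).Disjoint (σ.toList y) := by
  rw [Perm.cycleType_def, Multiset.count_map] at hk
  have hcard : 1 < (σ.cycleFactorsFinset.filter fun c => k = c.support.card).card := hk
  obtain ⟨c, hc, d, hd, hcd⟩ := Finset.one_lt_card.1 hcard
  rw [Finset.mem_filter] at hc hd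
  obtain ⟨x, rfl⟩ := exists_cycleOf_eq_of_mem_cycleFactorsFinset hc.1
  obtain ⟨y, rfl⟩ := exists_cycleOf_eq_of_mem_cycleFactorsFinset hd.1
  refine ⟨x, y, (Perm.length_toList σ x).trans hc.2.symm, (Perm.length_toList σ y).trans hd.2.symm,
    fun z hzx hzy => hcd ?_⟩
  exact ((Perm.mem_toList_iff.1 hzx).1.trans (Perm.mem_toList_iff.1 hzy).1.symm).cycleOf_eq

end CycleType

section Reduction

variable {α R A : Type*} [Fintype α] [DecidableEq α] [CommRing R] [Ring A] [Algebra R A]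
  {φ : Perm α →* A} {σ : Perm α}

theorem exists_lt_reflectionLength_of_four_le_length_toList (h2 : IsUnit (2 : R))
    (hφ : KillsAntisymmetrizers φ) {x : α} (hx : 4 ≤ (σ.toList x).length) :
    ∃ k < reflectionLength σ, φ σ ∈ lengthFiltration R φ k := by
  set l := σ.toList x
  have hl : l.Nodup := Perm.nodup_toList σ x
  have hsplit := reflectionLength_formPerm_inv_mul_add_length_le l σ hl (isChain_toList σ x)
  have hcycle : φ l.formPerm ∈ lengthFiltration R φ ((l.length + 1) / 2) :=
    formPerm_mem_lengthFiltration_of_length_le h2 hφ hl (by omega)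
  refine ⟨(l.length + 1) / 2 + reflectionLength (l.formPerm⁻¹ * σ), by omega, ?_⟩
  rw [← mul_inv_cancel_left l.formPerm σ, map_mul, inv_mul_cancel_left]
  exact mul_mem_lengthFiltration hcycle (apply_mem_lengthFiltration le_rfl)

theorem exists_lt_reflectionLength_of_disjoint_toList (h2 : IsUnit (2 : R))
    (hφ : KillsAntisymmetrizers φ) {x y : α} (hx : (σ.toList x).length = 3)
    (hy : (σ.toList y).length = 3) (hxy : (σ.toList x).Disjoint (σ.toList y)) :
    ∃ k < reflectionLength σ, φ σ ∈ lengthFiltration R φ k := by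
  have hnodup := (Perm.nodup_toList σ x).append (Perm.nodup_toList σ y) hxy
  have hsplit := reflectionLength_formPerm_inv_mul_add_length_le _ _ (Perm.nodup_toList σ x)
    (isChain_toList σ x)
  have hchain : (σ.toList y).IsChain fun a b => ((σ.toList x).formPerm⁻¹ * σ) a = b :=
    (isChain_toList σ y).imp_of_mem_tail_imp fun a b _ hb hab => by
      rw [Perm.mul_apply, hab, Perm.inv_eq_iff_eq,
        List.formPerm_apply_of_notMem fun h => hxy h (List.mem_of_mem_tail hb)]
  have hsplit' := reflectionLength_formPerm_inv_mul_add_length_le _ _ (Perm.nodup_toList σ y) hchain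
  set ρ := (σ.toList y).formPerm⁻¹ * ((σ.toList x).formPerm⁻¹ * σ)
  have hσ : σ = (σ.toList x).formPerm * (σ.toList y).formPerm * ρ := by
    rw [mul_assoc, mul_inv_cancel_left, mul_inv_cancel_left]
  have hpair : φ ((σ.toList x).formPerm * (σ.toList y).formPerm) ∈ lengthFiltration R φ 3 := by
    obtain ⟨a, b, c, habc⟩ := List.length_eq_three.1 hx
    obtain ⟨d, e, f, hdef⟩ := List.length_eq_three.1 hy
    rw [habc, hdef] at hnodup ⊢
    exact three_cycle_mul_formPerm_mem_lengthFiltration (m := 1) h2 hφ hnodup le_rfl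
  refine ⟨3 + reflectionLength ρ, by omega, ?_⟩
  rw [hσ, map_mul]
  exact mul_mem_lengthFiltration hpair (apply_mem_lengthFiltration le_rfl)

theorem exists_lt_reflectionLength_of_not_isSpecial {n : ℕ} {φ : Perm (Fin n) →* A}
    (h2 : IsUnit (2 : R)) (hφ : KillsAntisymmetrizers φ) {σ : Perm (Fin n)} (hσ : ¬IsSpecial σ) :
    ∃ k < reflectionLength σ, φ σ ∈ lengthFiltration R φ k := by
  rw [IsSpecial, not_and_or] at hσ
  push Not at hσ
  obtain ⟨i, hi, hi_gt⟩ | hcount := hσ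
  · obtain ⟨x, rfl⟩ := exists_length_toList_eq_of_mem_cycleType hi
    exact exists_lt_reflectionLength_of_four_le_length_toList h2 hφ hi_gt
  · obtain ⟨x, y, hx, hy, hxy⟩ := exists_disjoint_toList_of_one_lt_count_cycleType hcount
    exact exists_lt_reflectionLength_of_disjoint_toList h2 hφ hx hy hxy

theorem swapAlgebra_spanned_by_special_general {n : ℕ} {φ : Perm (Fin n) →* A}
    (h2 : IsUnit (2 : R)) (hφ : KillsAntisymmetrizers φ) :
    Submodule.span R (Set.range φ) =
      Submodule.span R {f | ∃ τ : Perm (Fin n), IsSpecial τ ∧ f = φ τ} := by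
  refine le_antisymm (Submodule.span_le.2 ?_) (Submodule.span_mono ?_)
  · rintro _ ⟨σ, rfl⟩
    induction hr : reflectionLength σ using Nat.strong_induction_on generalizing σ with
    | _ r ih =>
      by_cases hσ : IsSpecial σ
      · exact Submodule.subset_span ⟨σ, hσ, rfl⟩
      obtain ⟨k, hk, hmem⟩ := exists_lt_reflectionLength_of_not_isSpecial h2 hφ hσ
      refine Submodule.span_le.2 ?_ hmem
      rintro _ ⟨τ, hτ, rfl⟩
      exact ih _ (hr ▸ hτ.trans_lt hk) τ rfl
  · rintro _ ⟨τ, -, rfl⟩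
    exact ⟨τ, rfl⟩

end Reduction

section TensorPower

/-- The action of the symmetric group on the `n`-th tensor power, as a monoid homomorphism. -/
def permOpHom (d n : ℕ) : Perm (Fin n) →* Module.End ℂ ((Fin n → Fin d) → ℂ) where
  toFun := permOp d n
  map_one' := rfl
  map_mul' _ _ := rfl

theorem comp_swap_eq_self {α β : Type*} [DecidableEq α] {x : α → β} {p q : α} (h : x p = x q) :
    x ∘ swap p q = x := by
  rw [comp_swap_eq_update, h, Function.update_eq_self, ← h, Function.update_eq_self]

theorem killsAntisymmetrizers_permOpHom {d n : ℕ} (hd : d ≤ 2) :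
    KillsAntisymmetrizers (permOpHom d n) := by
  intro p q r hpq hqr hpr
  refine LinearMap.ext fun f => funext fun x => ?_
  change f x + f (x ∘ ⇑(swap p q * swap q r)) + f (x ∘ ⇑(swap q r * swap p q)) =
    f (x ∘ swap p q) + f (x ∘ swap q r) + f (x ∘ swap p r)
  have hpigeonhole : x p = x q ∨ x q = x r ∨ x r = x p := by omega
  have hpqr : swap p q * swap q r = swap q r * swap r p := swap_mul_swap_rotate hpq hpr
  have hrpq : swap p q * swap q r = swap r p * swap p q := by
    rw [hpqr, swap_mul_swap_rotate hqr hpq.symm]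
  have hqpr : swap q r * swap p q = swap p q * swap r p := by
    rw [swap_comm q r, swap_comm p q, swap_comm r p, swap_mul_swap_rotate hqr.symm hpr.symm]
  have hprq : swap q r * swap p q = swap r p * swap q r := by
    rw [hqpr, swap_comm p q, swap_comm r p, swap_comm q r, swap_mul_swap_rotate hpq.symm hqr]
  rw [swap_comm p r]
  rcases hpigeonhole with h | h | h
  · rw [hqpr]
    simp only [Perm.coe_mul, ← Function.comp_assoc, comp_swap_eq_self h]
  · rw [hpqr]
    simp only [Perm.coe_mul, ← Function.comp_assoc, comp_swap_eq_self h]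
    ring
  · rw [hrpq, hprq]
    simp only [Perm.coe_mul, ← Function.comp_assoc, comp_swap_eq_self h]
    ring

end TensorPower

/-- For every `n`, the swap algebra `Σₙ` (`dim V = 2`) is spanned by the operators
induced by special permutations. -/
theorem swapAlgebra_spanned_by_special (n : ℕ) :
    Submodule.span ℂ (Set.range (permOp 2 n)) =
      Submodule.span ℂ
        {f : Module.End ℂ ((Fin n → Fin 2) → ℂ) |
          ∃ τ : Equiv.Perm (Fin n), IsSpecial τ ∧ f = permOp 2 n τ} :=
  swapAlgebra_spanned_by_special_general (φ := permOpHom 2 n) (IsUnit.mk0 2 two_ne_zero)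
    (killsAntisymmetrizers_permOpHom le_rfl)
end

section
/- For n ≤ 7, the operators in End(V^⊗n), dim V = 2, induced by the involutions of S_n are linearly independent, while for n = 8 they are linearly dependent (there are 764 involutions but the symmetric part of Σ_8 has dimension 750). -/
/-!
Independence for `n ≤ 7`. Let `A` run over the identity and the Pauli matrices, so that
`tr (A a * A b)` vanishes exactly when `a ≠ b`. Given an involution `σ`, put the identity at its
fixed points and a Pauli matrix at both ends of each of its transpositions, distinct transpositions
receiving distinct matrices; four matrices suffice because there are at most three transpositions.
Contracting `τ` against the tensor product of these matrices gives a product of traces, which is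
nonzero for `τ = σ` and, for any other `τ`, only if `τ` moves more points than `σ`. The pairing is
therefore triangular.

Dependence for `n = 8`. Antisymmetrizing over `d + 1` positions kills `V^⊗n` when `dim V = d`, so a
permutation with a decreasing subsequence of length `d + 1` acts as a combination of
lexicographically smaller ones. For `g` without such a subsequence there is a colouring `c` of the
positions with `d` colours such that `g` increases on every colour class; the matrix entry of an
operator at `(c ∘ g⁻¹, c)` is `1` on `g` and vanishes on all smaller permutations. Hence the
operators `g + g⁻¹`, for `g` avoiding decreasing subsequences of length `d + 1` and up to
inversion, form a basis of the symmetric part. For `d = 2` and `n = 8` it has `750` elements,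
fewer than the `764` involutions.
-/

namespace InvolutionOperators

open Equiv Finset

theorem linearIndependent_of_triangular {ι R M β : Type*} [Ring R] [NoZeroDivisors R]
    [AddCommGroup M] [Module R M] [LinearOrder β] {v : ι → M} (φ : ι → M →ₗ[R] R) (rank : ι → β)
    (h_diag : ∀ i, φ i (v i) ≠ 0)
    (h_lower : ∀ i j, rank j ≤ rank i → j ≠ i → φ i (v j) = 0) :
    LinearIndependent R v := by
  classical
  rw [linearIndependent_iff']
  intro s c hc
  by_contra! hne
  obtain ⟨i₀, hi₀s, hi₀⟩ := hne
  obtain ⟨i, hi, hmax⟩ := exists_max_image {i ∈ s | c i ≠ 0} rank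
    ⟨i₀, mem_filter.2 ⟨hi₀s, hi₀⟩⟩
  obtain ⟨his, hci⟩ := mem_filter.1 hi
  have hφ : c i * φ i (v i) = 0 := by
    have hvanish : ∀ j ∈ s, j ≠ i → φ i (c j • v j) = 0 := by
      intro j hjs hji
      by_cases hcj : c j = 0
      · simp [hcj]
      · simp [h_lower i j (hmax j (mem_filter.2 ⟨hjs, hcj⟩)) hji]
    have := congrArg (φ i) hc
    rwa [map_sum, map_zero, sum_eq_single_of_mem i his hvanish, map_smul, smul_eq_mul] at this
  exact (mul_ne_zero hci (h_diag i)) hφ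

section Contraction

theorem prod_eq_prod_fixed_mul_prod_pairs {ι M : Type*} [Fintype ι] [LinearOrder ι] [CommMonoid M]
    {σ : ι → ι} (hσ : Function.Involutive σ) (f : ι → M) :
    ∏ i, f i = (∏ i with σ i = i, f i) * ∏ i with i < σ i, f i * f (σ i) := by
  have hflip : ∏ i with σ i < i, f i = ∏ i with i < σ i, f (σ i) :=
    prod_nbij' σ σ (by simp [hσ _]) (by simp [hσ _]) (by simp [hσ _]) (by simp [hσ _])
      (by simp [hσ _])
  rw [← prod_filter_mul_prod_filter_not univ (fun i => σ i = i),
    ← prod_filter_mul_prod_filter_not (univ.filter fun i => ¬ σ i = i) (fun i => i < σ i),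
    prod_mul_distrib, ← hflip, filter_filter, filter_filter]
  congr 3 <;> ext i <;> grind

/-- Split a word indexed by `ι` into its letters at the fixed points of an involution `σ` and its
pairs of letters at the two-element orbits, each orbit being represented by its smaller element. -/
def splitWord {ι κ : Type*} [LinearOrder ι] {σ : ι → ι} (hσ : Function.Involutive σ) :
    (ι → κ) ≃ ({i // σ i = i} → κ) × ({i // i < σ i} → κ × κ) where
  toFun x := (fun i => x i, fun i => (x i, x (σ i)))
  invFun y i :=
    if hfix : σ i = i then y.1 ⟨i, hfix⟩
    else if hlt : i < σ i then (y.2 ⟨i, hlt⟩).1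
    else (y.2 ⟨σ i, by rw [hσ]; exact lt_of_le_of_ne (not_lt.1 hlt) hfix⟩).2
  left_inv x := by ext i; simp [hσ i]
  right_inv y := by
    ext ⟨i, hi⟩
    · simp [hi]
    · simp [hi, hi.ne']
    · simp [hσ i, hi.ne, hi.not_gt]

theorem sum_prod_involutive_eq_prod_trace {ι κ R : Type*} [Fintype ι] [LinearOrder ι] [Fintype κ]
    [CommSemiring R] {σ : ι → ι} (hσ : Function.Involutive σ)
    (N : ι → Matrix κ κ R) :
    ∑ x : ι → κ, ∏ i, N i (x i) (x (σ i)) =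
      (∏ i with σ i = i, (N i).trace) * ∏ i with i < σ i, (N i * N (σ i)).trace := by
  have htrace_mul : ∀ i, (N i * N (σ i)).trace = ∑ p : κ × κ, N i p.1 p.2 * N (σ i) p.2 p.1 := by
    simp [Matrix.trace, Matrix.mul_apply, Fintype.sum_prod_type]
  simp only [htrace_mul]
  simp only [Matrix.trace, Matrix.diag_apply,
    prod_subtype (univ.filter fun i => σ i = i) (p := fun i => σ i = i) (by simp),
    prod_subtype (univ.filter fun i => i < σ i) (p := fun i => i < σ i) (by simp)]
  rw [prod_univ_sum, prod_univ_sum, Fintype.piFinset_univ, Fintype.piFinset_univ, sum_mul_sum,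
    ← sum_product', univ_product_univ]
  refine Fintype.sum_equiv (splitWord hσ) _ _ fun x => ?_
  simp only [prod_eq_prod_fixed_mul_prod_pairs hσ,
    prod_subtype (univ.filter fun i => σ i = i) (p := fun i => σ i = i) (by simp),
    prod_subtype (univ.filter fun i => i < σ i) (p := fun i => i < σ i) (by simp)]
  exact congrArg₂ _ (prod_congr rfl fun i _ => by simp [splitWord, i.2])
    (prod_congr rfl fun i _ => by simp [splitWord, hσ i.1])

variable {d n : ℕ}

/-- The linear form `T ↦ tr (T ∘ ⨂ (N i)ᵀ)` on the operators on `V^⊗n`. -/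
def contraction (N : Fin n → Matrix (Fin d) (Fin d) ℂ) :
    Module.End ℂ ((Fin n → Fin d) → ℂ) →ₗ[ℂ] ℂ :=
  ∑ x, LinearMap.proj x ∘ₗ LinearMap.applyₗ (fun y => ∏ i, N i (x i) (y i))

theorem contraction_permOp (N : Fin n → Matrix (Fin d) (Fin d) ℂ) {σ : Perm (Fin n)}
    (hσ : Function.Involutive σ) :
    contraction N (permOp d n σ) =
      (∏ i with σ i = i, (N i).trace) * ∏ i with i < σ i, (N i * N (σ i)).trace := by
  simpa [contraction, permOp] using sum_prod_involutive_eq_prod_trace hσ N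

theorem contraction_permOp_ne_zero_iff {C : Type*} {A : C → Matrix (Fin d) (Fin d) ℂ} {c₀ : C}
    (hA₀ : A c₀ = 1) (hA : ∀ a b, (A a * A b).trace ≠ 0 ↔ a = b) (c : Fin n → C)
    {σ : Perm (Fin n)} (hσ : Function.Involutive σ) :
    contraction (A ∘ c) (permOp d n σ) ≠ 0 ↔
      (∀ i, σ i = i → c i = c₀) ∧ ∀ i, c (σ i) = c i := by
  have htrace : ∀ a, (A a).trace ≠ 0 ↔ a = c₀ := fun a => by simpa [hA₀] using hA a c₀
  simp only [contraction_permOp _ hσ, mul_ne_zero_iff, prod_ne_zero_iff, mem_filter, mem_univ,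
    true_and, Function.comp_apply, htrace, hA]
  refine and_congr_right fun _ => ⟨fun h i => ?_, fun h i _ => (h i).symm⟩
  rcases lt_trichotomy i (σ i) with hlt | heq | hgt
  · exact (h i hlt).symm
  · rw [← heq]
  · simpa [hσ i] using h (σ i) (by rwa [hσ i])

theorem exists_orbit_coloring {ι C : Type*} [Fintype ι] [LinearOrder ι] [Fintype C] {s : ι → ι}
    (hs : Function.Involutive s) (c₀ : C) (hcard : Fintype.card ι < 2 * Fintype.card C) :
    ∃ c : ι → C, (∀ i, s i = i ↔ c i = c₀) ∧
      ∀ i j, s i ≠ i → (c j = c i ↔ j = i ∨ j = s i) := by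
  classical
  let M : Finset ι := {i | i < s i}
  have hM : 2 * #M ≤ Fintype.card ι := by
    have hle : #M ≤ #Mᶜ := card_le_card_of_injOn s
      (fun i hi => by simpa [M, hs i] using (mem_filter.1 hi).2.le) hs.injective.injOn
    have := card_add_card_compl M
    omega
  obtain ⟨e⟩ : Nonempty (M ↪ {a // a ≠ c₀}) := by
    refine Function.Embedding.nonempty_of_card_le ?_
    rw [Fintype.card_coe, Fintype.card_subtype_compl, Fintype.card_subtype_eq]
    omega
  have hmin : ∀ i, s i ≠ i → min i (s i) ∈ M := by
    intro i hi
    rcases hi.lt_or_gt with h | h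
    · simpa [M, h.le, hs i] using h
    · simpa [M, h.le] using h
  refine ⟨fun i => if hi : s i = i then c₀ else e ⟨min i (s i), hmin i hi⟩, fun i => ?_,
    fun i j hi => ?_⟩
  · by_cases hi : s i = i
    · simp [hi]
    · simpa [hi] using (e _).2
  · by_cases hj : s j = j
    · simp only [hj, hi, dite_true, dite_false]
      have := (e ⟨min i (s i), hmin i hi⟩).2
      have := hs i
      grind
    · simp only [hj, hi, dite_false, Subtype.val_inj, e.injective.eq_iff, Subtype.mk.injEq]
      have := hs i
      have := hs j
      grind

theorem linearIndependent_permOp_involutions {C : Type*} [Fintype C]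
    {A : C → Matrix (Fin d) (Fin d) ℂ} {c₀ : C} (hA₀ : A c₀ = 1)
    (hA : ∀ a b, (A a * A b).trace ≠ 0 ↔ a = b) (hn : n < 2 * Fintype.card C) :
    LinearIndependent ℂ
      (fun σ : {σ : Perm (Fin n) // σ * σ = 1} => permOp d n σ.1) := by
  have hinv (σ : {σ : Perm (Fin n) // σ * σ = 1}) : Function.Involutive σ.1 :=
    Equiv.ext_iff.1 σ.2
  choose c hfix horbit using fun σ => exists_orbit_coloring (hinv σ) c₀ (by simpa using hn)
  refine linearIndependent_of_triangular (fun σ => contraction (A ∘ c σ))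
    (fun σ => #σ.1.support) (fun σ => ?_) (fun σ τ hle hne => ?_)
  · refine (contraction_permOp_ne_zero_iff hA₀ hA _ (hinv σ)).2
      ⟨fun i => (hfix σ i).1, fun i => ?_⟩
    by_cases hi : σ.1 i = i
    · rw [hi]
    · exact (horbit σ i _ hi).2 (Or.inr rfl)
  · by_contra hτ
    obtain ⟨hτfix, hτcolor⟩ := (contraction_permOp_ne_zero_iff hA₀ hA _ (hinv τ)).1 hτ
    have hagree : ∀ i, σ.1 i ≠ i → τ.1 i = σ.1 i := fun i hi =>
      ((horbit σ i _ hi).1 (hτcolor i)).resolve_left fun h => hi ((hfix σ i).2 (hτfix i h))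
    have hsupport : σ.1.support = τ.1.support := by
      refine eq_of_subset_of_card_le (fun i hi => ?_) hle
      rw [Perm.mem_support] at hi ⊢
      rwa [hagree i hi]
    refine hne (Subtype.ext (Equiv.ext fun i => ?_))
    by_cases hi : σ.1 i = i
    · have : i ∉ τ.1.support := by rw [← hsupport]; simpa using hi
      rw [hi, Perm.notMem_support.1 this]
    · exact hagree i hi

/-- The identity and the three Pauli matrices. -/
def pauli : Fin 4 → Matrix (Fin 2) (Fin 2) ℂ :=
  ![1, !![0, 1; 1, 0], !![0, -Complex.I; Complex.I, 0], !![1, 0; 0, -1]]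

theorem trace_pauli_mul_pauli_ne_zero_iff (a b : Fin 4) :
    (pauli a * pauli b).trace ≠ 0 ↔ a = b := by
  fin_cases a <;> fin_cases b <;> simp [pauli, Matrix.trace_fin_two, Matrix.one_fin_two]

end Contraction

section CountingInvolutions

theorem mul_self_eq_one_iff_cycleType {α : Type*} [Fintype α] [DecidableEq α] {σ : Perm α} :
    σ * σ = 1 ↔ σ.cycleType = Multiset.replicate σ.cycleType.card 2 := by
  rw [← sq, ← orderOf_dvd_iff_pow_eq_one, ← Perm.lcm_cycleType, Multiset.lcm_dvd,
    Multiset.eq_replicate]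
  have htwo : ∀ b ∈ σ.cycleType, b ∣ 2 ↔ b = 2 := fun b hb =>
    ⟨fun h => (Nat.le_of_dvd two_pos h).antisymm (Perm.two_le_of_mem_cycleType hb),
      fun h => h.dvd⟩
  simpa using forall₂_congr htwo

open Nat in
theorem card_involutions (α : Type*) [Fintype α] [DecidableEq α] :
    Fintype.card {σ : Perm α // σ * σ = 1} = ∑ k ∈ range (Fintype.card α / 2 + 1),
      (Fintype.card α)! / ((Fintype.card α - 2 * k)! * 2 ^ k * k !) := by
  have hmaps : Set.MapsTo (fun σ : Perm α => σ.cycleType.card)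
      (univ.filter fun σ : Perm α => σ * σ = 1) (range (Fintype.card α / 2 + 1)) := by
    intro σ hσ
    have hsum : σ.cycleType.sum = σ.cycleType.card * 2 := by
      rw [mul_self_eq_one_iff_cycleType.1 (mem_filter.1 hσ).2]
      simp
    have := (Perm.sum_cycleType σ).trans_le (card_le_univ σ.support)
    simp only [coe_range, Set.mem_Iio]
    omega
  rw [Fintype.card_subtype, card_eq_sum_card_fiberwise hmaps]
  refine sum_congr rfl fun k hk => ?_
  have hfiber : {σ ∈ univ.filter (fun σ : Perm α => σ * σ = 1) | σ.cycleType.card = k} =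
      univ.filter fun σ : Perm α => σ.cycleType = Multiset.replicate k 2 := by
    ext σ
    simp only [mem_filter, mem_univ, true_and, mul_self_eq_one_iff_cycleType]
    refine ⟨fun ⟨h, hk⟩ => hk ▸ h, fun h => ?_⟩
    have hcard : σ.cycleType.card = k := by simp [h]
    exact ⟨hcard ▸ h, hcard⟩
  have hk : k * 2 ≤ Fintype.card α := by have := mem_range.1 hk; omega
  rw [hfiber, Perm.card_of_cycleType, if_pos (by simp +contextual [Multiset.mem_replicate, hk])]
  rcases eq_or_ne k 0 with rfl | hk0
  · simp
  · simp [Multiset.toFinset_replicate, hk0, mul_comm k]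

theorem card_involutions_fin_eight : Fintype.card {σ : Perm (Fin 8) // σ * σ = 1} = 764 := by
  simp [card_involutions, sum_range_succ, Nat.factorial]

end CountingInvolutions

section AvoidsDecreasing

/-- The sequence `f` has no strictly decreasing subsequence of length `d + 1`; for a permutation
this is avoidance of the pattern `(d + 1) d ⋯ 1`. -/
def AvoidsDecreasing {α β : Type*} [Preorder α] [Preorder β] (d : ℕ) (f : α → β) : Prop :=
  ∀ s : Finset α, StrictAntiOn f s → #s ≤ d

variable {α β : Type*} [LinearOrder α] [LinearOrder β] {d : ℕ}

theorem AvoidsDecreasing.inv {g : Perm α} (hg : AvoidsDecreasing d g) :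
    AvoidsDecreasing d (g⁻¹ : Perm α) := by
  intro s hs
  have hanti : StrictAntiOn g (s.map g⁻¹.toEmbedding) := by
    intro a ha b hb hab
    simp only [coe_map, Set.mem_image, mem_coe, toEmbedding_apply] at ha hb
    obtain ⟨i, hi, rfl⟩ := ha
    obtain ⟨j, hj, rfl⟩ := hb
    simpa using (hs.lt_iff_gt hi hj).1 hab
  simpa using hg _ hanti

-- Colour `i` by the length of the longest decreasing subsequence which can be extended by `i`.
theorem AvoidsDecreasing.exists_coloring [Finite α] {f : α → β} (hf : AvoidsDecreasing d f) :
    ∃ c : α → Fin d, ∀ i j, i < j → c i = c j → f i ≤ f j := by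
  classical
  cases nonempty_fintype α
  let above (i : α) : Finset (Finset α) := {s | StrictAntiOn f s ∧ ∀ j ∈ s, j < i ∧ f i < f j}
  let height (i : α) : ℕ := (above i).sup card
  have hinsert : ∀ i, ∀ s ∈ above i,
      StrictAntiOn f (insert i s : Finset α) ∧ #(insert i s) = #s + 1 := by
    intro i s hs
    obtain ⟨hanti, hlt⟩ := (mem_filter.1 hs).2
    refine ⟨?_, card_insert_of_notMem fun hi => (hlt i hi).1.false⟩
    rw [coe_insert, strictAntiOn_insert_iff_of_forall_le fun j hj => (hlt j hj).1.le]
    exact ⟨fun j hj _ => (hlt j hj).2, hanti⟩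
  have hattained : ∀ i, ∃ s ∈ above i, height i = #s := fun i =>
    exists_mem_eq_sup _ ⟨∅, by simp [above, StrictAntiOn]⟩ card
  have hheight : ∀ i, height i < d := by
    intro i
    obtain ⟨s, hs, hcard⟩ := hattained i
    obtain ⟨hanti, hsucc⟩ := hinsert i s hs
    have := hf _ hanti
    omega
  refine ⟨fun i => ⟨height i, hheight i⟩, fun i j hij hc => ?_⟩
  by_contra! hji
  obtain ⟨s, hs, hcard⟩ := hattained i
  obtain ⟨hanti, hsucc⟩ := hinsert i s hs
  have hmem : insert i s ∈ above j := by
    refine mem_filter.2 ⟨mem_univ _, hanti, (forall_mem_insert ..).2 ⟨⟨hij, hji⟩, ?_⟩⟩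
    intro k hk
    obtain ⟨hki, hik⟩ := (mem_filter.1 hs).2.2 k hk
    exact ⟨hki.trans hij, hji.trans hik⟩
  have hle : #(insert i s) ≤ height j := le_sup (f := card) hmem
  have : height i = height j := Fin.mk.inj_iff.1 hc
  omega

theorem not_toLex_lt_of_color_eq {C : Type*} {g h : Perm α} {c : α → C}
    (hc : ∀ i j, i < j → c i = c j → g i ≤ g j) (hcolor : ∀ i, c (g⁻¹ (h i)) = c i) :
    ¬ toLex ⇑h < toLex ⇑g := by
  rintro ⟨i, hagree, hlt⟩
  obtain ⟨k, hk⟩ : ∃ k, g k = h i := ⟨g⁻¹ (h i), by simp⟩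
  have hck : c i = c k := by simpa [← hk] using (hcolor i).symm
  replace hlt : g k < g i := by rw [hk]; exact hlt
  rcases lt_trichotomy k i with hki | rfl | hik
  · have : h k = h i := (hagree k hki).trans hk
    exact hki.ne (h.injective this)
  · exact hlt.false
  · exact hlt.not_ge (hc i k hik hck)

end AvoidsDecreasing

section SymmetricPart

variable {d n : ℕ}

theorem AvoidsDecreasing.exists_dual {g : Perm (Fin n)} (hg : AvoidsDecreasing d g) :
    ∃ φ : Module.End ℂ ((Fin n → Fin d) → ℂ) →ₗ[ℂ] ℂ,
      φ (permOp d n g) = 1 ∧ ∀ h : Perm (Fin n), toLex ⇑h < toLex ⇑g → φ (permOp d n h) = 0 := by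
  obtain ⟨c, hc⟩ := hg.exists_coloring
  refine ⟨LinearMap.proj (c ∘ ⇑g⁻¹) ∘ₗ LinearMap.applyₗ (Pi.single c 1), ?_, fun h hlt => ?_⟩
  · simp [permOp, Function.comp_assoc]
  · have hne : (c ∘ ⇑g⁻¹) ∘ ⇑h ≠ c := fun h_eq =>
      not_toLex_lt_of_color_eq hc (congrFun h_eq) hlt
    exact Pi.single_eq_of_ne hne 1

theorem permOp_mul (g h : Perm (Fin n)) : permOp d n (g * h) = permOp d n g * permOp d n h := rfl

-- By pigeonhole every word has two equal letters at positions in `s`; multiplication by their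
-- transposition pairs up the terms of the sum with opposite signs.
theorem sum_sign_smul_permOp_ofSubtype {s : Finset (Fin n)} (hs : d < #s) :
    ∑ σ : Perm s, Perm.sign σ • permOp d n (Perm.ofSubtype σ) = 0 := by
  refine LinearMap.ext fun f => funext fun z => ?_
  obtain ⟨a, b, hab, hz⟩ : ∃ a b : s, a ≠ b ∧ z a = z b :=
    Fintype.exists_ne_map_eq_of_card_lt (fun a : s => z a) (by simpa)
  have hswap : z ∘ ⇑(Perm.ofSubtype (swap a b)) = z := by
    rw [Perm.ofSubtype_swap_eq]
    ext i
    simp only [Function.comp_apply, swap_apply_def]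
    split_ifs with h₁ h₂ <;> simp [*]
  have hterm (σ : Perm s) :
      permOp d n (Perm.ofSubtype (swap a b * σ)) f z = permOp d n (Perm.ofSubtype σ) f z := by
    rw [map_mul]
    exact congrArg (fun w => f (w ∘ ⇑(Perm.ofSubtype σ))) hswap
  rw [LinearMap.sum_apply, Finset.sum_apply]
  refine sum_involution (fun σ _ => swap a b * σ) (fun σ _ => ?_) (fun σ _ _ => ?_)
    (fun σ _ => mem_univ _) (fun σ _ => swap_mul_self_mul a b σ)
  · simp only [LinearMap.smul_apply, Pi.smul_apply, hterm, Perm.sign_mul, Perm.sign_swap hab,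
      neg_one_mul, Units.neg_smul, LinearMap.neg_apply, Pi.neg_apply, add_neg_cancel]
  · simpa using hab

/-- The symmetrization `g + g⁻¹` of the operator of `g`. -/
def symPermOp (d n : ℕ) (g : Perm (Fin n)) : Module.End ℂ ((Fin n → Fin d) → ℂ) :=
  permOp d n g + permOp d n g⁻¹

theorem symPermOp_inv (g : Perm (Fin n)) : symPermOp d n g⁻¹ = symPermOp d n g := by
  rw [symPermOp, symPermOp, inv_inv, add_comm]

theorem sum_sign_smul_symPermOp {s : Finset (Fin n)} (hs : d < #s) (g : Perm (Fin n)) :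
    ∑ σ : Perm s, Perm.sign σ • symPermOp d n (g * Perm.ofSubtype σ) = 0 := by
  have hright : ∑ σ : Perm s, Perm.sign σ • permOp d n (g * Perm.ofSubtype σ) = 0 := by
    simp only [permOp_mul, ← mul_smul_comm, ← mul_sum, sum_sign_smul_permOp_ofSubtype hs, mul_zero]
  have hleft : ∑ σ : Perm s, Perm.sign σ • permOp d n (g * Perm.ofSubtype σ)⁻¹ = 0 := by
    rw [← Equiv.sum_comp (Equiv.inv (Perm s))]
    simp only [Equiv.inv_apply, map_inv, Int.units_inv_eq_self, mul_inv_rev, inv_inv, permOp_mul,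
      ← smul_mul_assoc, ← sum_mul, sum_sign_smul_permOp_ofSubtype hs, zero_mul]
  simp only [symPermOp, smul_add, sum_add_distrib, hright, hleft, add_zero]

theorem toLex_mul_ofSubtype_lt {g : Perm (Fin n)} {s : Finset (Fin n)} (hg : StrictAntiOn g s)
    {σ : Perm s} (hσ : σ ≠ 1) : toLex ⇑(g * Perm.ofSubtype σ) < toLex ⇑g := by
  obtain ⟨a, ha, hmin⟩ := exists_min_image σ.support id
    (nonempty_iff_ne_empty.2 (Perm.support_eq_empty_iff.not.2 hσ))
  have hlt : a < σ a :=
    (hmin _ (Perm.apply_mem_support.2 ha)).lt_of_ne (Perm.mem_support.1 ha).symm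
  refine ⟨a, fun j hj => ?_, ?_⟩
  · change g (Perm.ofSubtype σ j) = g j
    by_cases hjs : j ∈ s
    · have hfix : σ ⟨j, hjs⟩ = ⟨j, hjs⟩ := by
        by_contra hmoved
        exact (hmin _ (Perm.mem_support.2 hmoved)).not_gt hj
      rw [Perm.ofSubtype_apply_of_mem _ hjs, hfix]
    · rw [Perm.ofSubtype_apply_of_not_mem _ hjs]
  · change g (Perm.ofSubtype σ a) < g a
    rw [Perm.ofSubtype_apply_coe]
    exact hg a.2 (σ a).2 hlt

/-- The permutations indexing a basis of the symmetric part: those avoiding decreasing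
subsequences of length `d + 1`, one from each pair `{g, g⁻¹}`. -/
def IsLexMaxAvoider (d : ℕ) (g : Perm (Fin n)) : Prop :=
  AvoidsDecreasing d g ∧ toLex ⇑g⁻¹ ≤ toLex ⇑g

theorem linearIndependent_symPermOp_isLexMaxAvoider :
    LinearIndependent ℂ fun g : {g : Perm (Fin n) // IsLexMaxAvoider d g} =>
      symPermOp d n g.1 := by
  choose φ hone hzero using
    fun g : {g : Perm (Fin n) // IsLexMaxAvoider d g} => g.2.1.exists_dual
  refine linearIndependent_of_triangular φ (fun g => toLex ⇑g.1) (fun g => ?_)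
    (fun g h hle hne => ?_)
  · rw [symPermOp, map_add, hone]
    rcases g.2.2.lt_or_eq with hlt | heq
    · rw [hzero g _ hlt]
      norm_num
    · rw [DFunLike.coe_injective (toLex.injective heq), hone]
      norm_num
  · have hlt : toLex ⇑h.1 < toLex ⇑g.1 := hle.lt_of_ne fun heq =>
      hne (Subtype.ext (DFunLike.coe_injective (toLex.injective heq)))
    rw [symPermOp, map_add, hzero g _ hlt, hzero g _ (h.2.2.trans_lt hlt), add_zero]

theorem symPermOp_mem_span (g : Perm (Fin n)) :
    symPermOp d n g ∈ Submodule.span ℂ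
      (Set.range fun h : {h : Perm (Fin n) // IsLexMaxAvoider d h} => symPermOp d n h.1) := by
  induction g using WellFounded.induction
    (InvImage.wf (fun g : Perm (Fin n) => toLex ⇑g) wellFounded_lt) with | _ g ih
  by_cases hg : AvoidsDecreasing d g
  · rcases le_total (toLex ⇑g⁻¹) (toLex ⇑g) with hle | hle
    · exact Submodule.subset_span ⟨⟨g, hg, hle⟩, rfl⟩
    · exact Submodule.subset_span ⟨⟨g⁻¹, hg.inv, by rwa [inv_inv]⟩, symPermOp_inv g⟩
  · obtain ⟨s, hanti, hs⟩ : ∃ s : Finset (Fin n), StrictAntiOn g s ∧ d < #s := by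
      simpa [AvoidsDecreasing] using hg
    have hrel := sum_sign_smul_symPermOp hs g
    rw [← add_sum_erase _ _ (mem_univ 1), Perm.sign_one, one_smul, map_one, mul_one,
      add_eq_zero_iff_eq_neg] at hrel
    rw [hrel]
    exact neg_mem <| sum_mem fun σ hσ => Submodule.smul_of_tower_mem _ _
      (ih _ (toLex_mul_ofSubtype_lt hanti (ne_of_mem_erase hσ)))

variable (d n) in
/-- The symmetric part of the image of the group algebra of `S_n` in `End (V^⊗n)`: the span of
the operators `g + g⁻¹`. -/
def symmetricPart : Submodule ℂ (Module.End ℂ ((Fin n → Fin d) → ℂ)) :=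
  Submodule.span ℂ {f | ∃ g : Perm (Fin n), f = permOp d n g + permOp d n g⁻¹}

variable (d n) in
theorem finrank_symmetricPart : Module.finrank ℂ (symmetricPart d n) =
    Nat.card {g : Perm (Fin n) // IsLexMaxAvoider d g} := by
  have hspan : symmetricPart d n = Submodule.span ℂ
      (Set.range fun g : {g : Perm (Fin n) // IsLexMaxAvoider d g} => symPermOp d n g.1) := by
    refine le_antisymm (Submodule.span_le.2 ?_) (Submodule.span_mono ?_)
    · rintro _ ⟨g, rfl⟩
      exact symPermOp_mem_span g
    · rintro _ ⟨g, rfl⟩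
      exact ⟨g, rfl⟩
  rw [hspan, Module.finrank_eq_nat_card_basis
    (Module.Basis.span linearIndependent_symPermOp_isLexMaxAvoider)]

theorem permOp_mem_symmetricPart {σ : Perm (Fin n)} (hσ : σ * σ = 1) :
    permOp d n σ ∈ symmetricPart d n := by
  have hmem : (2 : ℂ) • permOp d n σ ∈ symmetricPart d n :=
    Submodule.subset_span ⟨σ, by rw [inv_eq_of_mul_eq_one_left hσ, two_smul]⟩
  exact (Submodule.smul_mem_iff _ two_ne_zero).1 hmem

theorem card_involutions_le_finrank_symmetricPart
    (h : LinearIndependent ℂ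
      fun σ : {σ : Perm (Fin n) // σ * σ = 1} => permOp d n σ.1) :
    Fintype.card {σ : Perm (Fin n) // σ * σ = 1} ≤ Module.finrank ℂ (symmetricPart d n) := by
  rw [← finrank_span_eq_card h]
  refine Submodule.finrank_mono (Submodule.span_le.2 ?_)
  rintro _ ⟨σ, rfl⟩
  exact permOp_mem_symmetricPart σ.2

end SymmetricPart

section PrunedPermutations

theorem sublist_of_mem_permutations'Aux {α : Type*} {a : α} {s t : List α}
    (h : t ∈ s.permutations'Aux a) : s.Sublist t := by
  induction s generalizing t with
  | nil => exact List.nil_sublist t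
  | cons b s ih =>
    rw [List.permutations'Aux, List.mem_cons, List.mem_map] at h
    rcases h with rfl | ⟨u, hu, rfl⟩
    · exact List.sublist_cons_self a _
    · exact (ih hu).cons_cons b

/-- The permutations of a list satisfying `p`, built by inserting one entry at a time and
discarding the lists violating `p` at each stage. -/
def prunedPermutations {α : Type*} (p : List α → Bool) : List α → List (List α)
  | [] => [[]].filter p
  | a :: l => ((prunedPermutations p l).flatMap (List.permutations'Aux a)).filter p

theorem prunedPermutations_eq_filter {α : Type*} {p : List α → Bool}
    (hp : ∀ s t : List α, s.Sublist t → p t → p s) (l : List α) :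
    prunedPermutations p l = l.permutations'.filter p := by
  induction l with
  | nil => rfl
  | cons a l ih =>
    have hprune : ∀ L : List (List α), ((L.filter p).flatMap (List.permutations'Aux a)).filter p =
        (L.flatMap (List.permutations'Aux a)).filter p := by
      intro L
      induction L with
      | nil => rfl
      | cons s L ihL =>
        by_cases hs : p s
        · simp [hs, ihL]
        · have hnone : (s.permutations'Aux a).filter p = [] := List.filter_eq_nil_iff.2
            fun t ht hpt => hs (hp s t (sublist_of_mem_permutations'Aux ht) hpt)
          simp [hs, ihL, hnone]
    rw [prunedPermutations, ih, hprune, List.permutations']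

/-- Test that `l` has no strictly decreasing sublist of length `d + 1`: such a sublist consists of
an entry `a` and a decreasing sublist of length `d` of the later entries below `a`. -/
def noDecreasing : ℕ → List ℕ → Bool
  | 0, l => l.isEmpty
  | d + 1, l => l.tails.all fun
    | [] => true
    | a :: t => noDecreasing d (t.filter (· < a))

theorem noDecreasing_iff {d : ℕ} {l : List ℕ} :
    noDecreasing d l ↔ ∀ t : List ℕ, t.Sublist l → t.Pairwise (· > ·) → t.length ≤ d := by
  induction d generalizing l with
  | zero =>
    cases l with
    | nil => simp [noDecreasing]
    | cons a l => simpa [noDecreasing] using ⟨[a], by simp⟩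
  | succ d ihd =>
    induction l with
    | nil => simp [noDecreasing]
    | cons a l ihl =>
      have hcons : noDecreasing (d + 1) (a :: l) =
        (noDecreasing d (l.filter (· < a)) && noDecreasing (d + 1) l) := rfl
      rw [hcons, Bool.and_eq_true, ihd, ihl]
      refine ⟨fun ⟨hbelow, htail⟩ t ht hdec => ?_, fun h => ⟨fun t ht hdec => ?_, fun t ht =>
        h t (ht.cons a)⟩⟩
      · rcases List.sublist_cons_iff.1 ht with htl | ⟨t, rfl, htl⟩
        · exact htail t htl hdec
        · obtain ⟨hlt, hdec⟩ := List.pairwise_cons.1 hdec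
          have hfilter : t.filter (· < a) = t := List.filter_eq_self.2 (by simpa using hlt)
          have hsub : t.Sublist (l.filter (· < a)) := by
            rw [← hfilter]
            exact htl.filter _
          simpa using hbelow t hsub hdec
      · have hlt : ∀ b ∈ t, a > b := fun b hb => by simpa using List.of_mem_filter (ht.subset hb)
        have := h (a :: t) ((ht.trans List.filter_sublist).cons_cons a)
          (List.pairwise_cons.2 ⟨hlt, hdec⟩)
        simpa using this

theorem prunedPermutations_noDecreasing (d : ℕ) (l : List ℕ) :
    prunedPermutations (noDecreasing d) l = l.permutations'.filter (noDecreasing d) :=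
  prunedPermutations_eq_filter
    (fun _ _ hst ht => noDecreasing_iff.2 fun u hu => noDecreasing_iff.1 ht u (hu.trans hst)) l

end PrunedPermutations

section OneLine

variable {n : ℕ}

/-- The one-line notation `g(0) g(1) ⋯ g(n - 1)` of a permutation of `{0, …, n - 1}`. -/
def oneLine (g : Perm (Fin n)) : List ℕ := List.ofFn fun i => (g i : ℕ)

theorem oneLine_injective : Function.Injective (oneLine (n := n)) := fun _ _ hgh =>
  Equiv.ext fun i => Fin.ext (congrFun (List.ofFn_injective hgh) i)

theorem oneLine_perm_range (g : Perm (Fin n)) : (oneLine g).Perm (List.range n) := by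
  have := g.ofFn_comp_perm ((↑) : Fin n → ℕ)
  rwa [List.ofFn_eq_map (f := ((↑) : Fin n → ℕ)), List.map_coe_finRange_eq_range] at this

theorem exists_oneLine_eq_iff {l : List ℕ} :
    (∃ g : Perm (Fin n), oneLine g = l) ↔ l.Perm (List.range n) := by
  refine ⟨fun ⟨g, hg⟩ => hg ▸ oneLine_perm_range g, fun hl => ?_⟩
  have hlength : l.length = n := by simpa using hl.length_eq
  have hnodup : l.Nodup := hl.nodup_iff.2 List.nodup_range
  have hlt (i : Fin n) : l[i] < n := List.mem_range.1 (hl.subset (List.getElem_mem _))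
  have hinj : Function.Injective fun i : Fin n => (⟨l[i], hlt i⟩ : Fin n) := fun i j hij =>
    Fin.ext ((hnodup.getElem_inj_iff).1 (Fin.mk.inj_iff.1 hij))
  exact ⟨.ofBijective _ (Finite.injective_iff_bijective.1 hinj),
    List.ext_getElem (by simp [oneLine, hlength]) (by simp [oneLine])⟩

theorem oneLine_inv (g : Perm (Fin n)) :
    oneLine g⁻¹ = (List.range n).map fun i => (oneLine g).idxOf i := by
  have hnodup : (oneLine g).Nodup := (oneLine_perm_range g).nodup_iff.2 List.nodup_range
  refine List.ext_getElem (by simp [oneLine]) fun i hi _ => ?_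
  have hin : i < n := by simpa [oneLine] using hi
  have hget : (oneLine g)[(g⁻¹ ⟨i, hin⟩ : ℕ)]'(by simp [oneLine]) = i := by simp [oneLine]
  have hidx := hnodup.idxOf_getElem (g⁻¹ ⟨i, hin⟩ : ℕ) (by simp [oneLine])
  rw [hget] at hidx
  simpa [oneLine] using hidx.symm

theorem oneLine_lt_iff {g h : Perm (Fin n)} : oneLine g < oneLine h ↔ toLex ⇑g < toLex ⇑h := by
  rw [List.lt_iff_exists]
  constructor
  · rintro (⟨-, hlt⟩ | ⟨i, hi, hi', hagree, hlt⟩)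
    · simp [oneLine] at hlt
    · refine ⟨⟨i, by simpa [oneLine] using hi⟩, fun j hj => ?_, by simpa [oneLine] using hlt⟩
      simpa [oneLine, Fin.val_inj] using hagree j hj
  · rintro ⟨i, hagree, hlt⟩
    refine Or.inr ⟨i, by simp [oneLine], by simp [oneLine], fun j hj => ?_,
      by simpa [oneLine] using hlt⟩
    simpa [oneLine, Fin.val_inj] using hagree ⟨j, hj.trans i.2⟩ hj

theorem oneLine_le_iff {g h : Perm (Fin n)} : oneLine g ≤ oneLine h ↔ toLex ⇑g ≤ toLex ⇑h :=
  not_lt.symm.trans ((not_congr oneLine_lt_iff).trans not_lt)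

theorem noDecreasing_oneLine_iff {d : ℕ} {g : Perm (Fin n)} :
    noDecreasing d (oneLine g) ↔ AvoidsDecreasing d g := by
  rw [noDecreasing_iff, oneLine, List.ofFn_eq_map]
  constructor
  · intro h s hs
    have hlt : ((List.finRange n).filter (· ∈ s)).Pairwise (· < ·) :=
      (List.pairwise_lt_finRange n).filter _
    have hcard : #s = ((List.finRange n).filter (· ∈ s)).length := by
      rw [← List.toFinset_card_of_nodup hlt.nodup]
      congr 1
      ext i
      simp
    rw [hcard]
    refine (List.length_map _).symm.trans_le
      (h (((List.finRange n).filter (· ∈ s)).map fun i => (g i : ℕ))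
        (List.filter_sublist.map _) ?_)
    rw [List.pairwise_map]
    exact hlt.imp_of_mem fun ha hb hab => hs (by simpa using ha) (by simpa using hb) hab
  · intro h t ht hdec
    obtain ⟨u, hu, rfl⟩ := List.sublist_map_iff.1 ht
    have hlt := (List.pairwise_lt_finRange n).sublist hu
    rw [List.pairwise_map] at hdec
    have hanti : StrictAntiOn g (u.toFinset : Set (Fin n)) := by
      intro a ha b hb hab
      obtain ⟨i, hi, rfl⟩ := List.getElem_of_mem (List.mem_toFinset.1 ha)
      obtain ⟨j, hj, rfl⟩ := List.getElem_of_mem (List.mem_toFinset.1 hb)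
      have hij : i < j := by
        by_contra! hji
        rcases hji.eq_or_lt with rfl | hji
        · exact hab.false
        · exact hab.not_gt (List.pairwise_iff_getElem.1 hlt j i hj hi hji)
      exact List.pairwise_iff_getElem.1 hdec i j hi hj hij
    have := h _ hanti
    rwa [List.toFinset_card_of_nodup hlt.nodup, ← List.length_map (f := fun i => (g i : ℕ))] at this

theorem card_isLexMaxAvoider (d n : ℕ) :
    Nat.card {g : Perm (Fin n) // IsLexMaxAvoider d g} =
      ((prunedPermutations (noDecreasing d) (List.range n)).filter fun l =>
        (List.range n).map (fun i => l.idxOf i) ≤ l).length := by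
  set L := (prunedPermutations (noDecreasing d) (List.range n)).filter fun l =>
    (List.range n).map (fun i => l.idxOf i) ≤ l with hL
  have hmem (l : List ℕ) : l ∈ L ↔ l.Perm (List.range n) ∧ noDecreasing d l ∧
      (List.range n).map (fun i => l.idxOf i) ≤ l := by
    simp only [hL, prunedPermutations_noDecreasing, List.mem_filter, List.mem_permutations',
      decide_eq_true_eq, and_assoc]
  have hnodup : L.Nodup := by
    rw [hL, prunedPermutations_noDecreasing]
    exact (((List.permutations_perm_permutations' _).nodup_iff.1
      (List.nodup_permutations _ List.nodup_range)).filter _).filter _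
  have honeLine (g : Perm (Fin n)) : IsLexMaxAvoider d g ↔ oneLine g ∈ L := by
    rw [hmem, ← oneLine_inv, oneLine_le_iff, noDecreasing_oneLine_iff,
      and_iff_right (oneLine_perm_range g), IsLexMaxAvoider]
  have hbij : Set.BijOn oneLine {g : Perm (Fin n) | IsLexMaxAvoider d g} ↑L.toFinset := by
    refine ⟨fun g hg => ?_, oneLine_injective.injOn, fun l hl => ?_⟩
    · exact List.mem_toFinset.2 ((honeLine g).1 hg)
    · rw [mem_coe, List.mem_toFinset] at hl
      obtain ⟨g, rfl⟩ := exists_oneLine_eq_iff.2 ((hmem l).1 hl).1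
      exact ⟨g, (honeLine g).2 hl, rfl⟩
  calc Nat.card {g : Perm (Fin n) // IsLexMaxAvoider d g}
    _ = (L.toFinset : Set (List ℕ)).ncard := hbij.ncard_eq
    _ = L.length := by rw [Set.ncard_coe_finset, List.toFinset_card_of_nodup hnodup]

set_option maxRecDepth 100000 in
theorem finrank_symmetricPart_two_eight : Module.finrank ℂ (symmetricPart 2 8) = 750 := by
  rw [finrank_symmetricPart, card_isLexMaxAvoider]
  decide +kernel

end OneLine

end InvolutionOperators

/-- For `n ≤ 7` the operators on `V^⊗n` (`dim V = 2`) induced by the involutions of `Sₙ`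
are linearly independent, while for `n = 8` they are linearly dependent: there are
`764` involutions in `S₈` but the symmetric part of `Σ₈` has dimension `750`. -/
theorem involution_operators_independent_iff_n_le_seven :
    (∀ n : ℕ, n ≤ 7 →
      LinearIndependent ℂ
        (fun σ : {σ : Equiv.Perm (Fin n) // σ * σ = 1} => permOp 2 n σ.1)) ∧
    ¬ LinearIndependent ℂ
        (fun σ : {σ : Equiv.Perm (Fin 8) // σ * σ = 1} => permOp 2 8 σ.1) ∧
    Fintype.card {σ : Equiv.Perm (Fin 8) // σ * σ = 1} = 764 ∧
    Module.finrank ℂ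
      (Submodule.span ℂ
        {f : Module.End ℂ ((Fin 8 → Fin 2) → ℂ) |
          ∃ g : Equiv.Perm (Fin 8), f = permOp 2 8 g + permOp 2 8 g⁻¹}) = 750 := by
  have hinvolutions := InvolutionOperators.card_involutions_fin_eight
  have hfinrank := InvolutionOperators.finrank_symmetricPart_two_eight
  refine ⟨fun n hn => ?_, fun hindep => ?_, hinvolutions, hfinrank⟩
  · exact InvolutionOperators.linearIndependent_permOp_involutions (c₀ := 0) rfl
      InvolutionOperators.trace_pauli_mul_pauli_ne_zero_iff (by rw [Fintype.card_fin]; omega)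
  · have := InvolutionOperators.card_involutions_le_finrank_symmetricPart hindep
    omega
end
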